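/- For any fixed c ∈ ℤ≥2, the following problem is undecidable: given a network, decide whether there exists m ∈ ℤ≥1 such that the network is solvable with alphabet size q = c^m. -/

import Mathlib

open scoped Classical

noncomputable section

/-- The probability of the event `S` under the probability mass function `p`. -/
def Pr {Ω : Type} (p : Ω → ℝ) (S : Set Ω) : ℝ := ∑' ω : S, p ω

/-- `p` is a probability mass function on the sample space `Ω`. -/
def IsProb {Ω : Type} (p : Ω → ℝ) : Prop := (∀ ω, 0 ≤ p ω) ∧ Pr p Set.univ = 1

/-- The support of a random variable `X`: the set of values attained with positive
probability. -/
def supp {Ω α : Type} (p : Ω → ℝ) (X : Ω → α) : Set α := {a | 0 < Pr p {ω | X ω = a}}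

/-- `X` is almost surely a function of `Y` (written `X ≤ι Y` in the paper). -/
def FuncOf {Ω α β : Type} (p : Ω → ℝ) (X : Ω → α) (Y : Ω → β) : Prop :=
  ∃ f : β → α, Pr p {ω | X ω = f (Y ω)} = 1

/-- The random variables `X` and `Y` are independent. -/
def IndepRV {Ω α β : Type} (p : Ω → ℝ) (X : Ω → α) (Y : Ω → β) : Prop :=
  ∀ (a : α) (b : β), Pr p {ω | X ω = a ∧ Y ω = b} = Pr p {ω | X ω = a} * Pr p {ω | Y ω = b}

/-- The random variables `X`, `Y`, `Z` are mutually independent: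
`X ⟂ Y` and `(X, Y) ⟂ Z`. -/
def Indep3 {Ω α β γ : Type} (p : Ω → ℝ) (X : Ω → α) (Y : Ω → β) (Z : Ω → γ) : Prop :=
  IndepRV p X Y ∧ IndepRV p (fun ω => (X ω, Y ω)) Z

/-- The predicate `tri(X, Y, Z)`: each variable is a.s. a function of the other two, and the
three variables are pairwise independent. -/
def tri {Ω α β γ : Type} (p : Ω → ℝ) (X : Ω → α) (Y : Ω → β) (Z : Ω → γ) : Prop :=
  FuncOf p X (fun ω => (Y ω, Z ω)) ∧ FuncOf p Y (fun ω => (X ω, Z ω)) ∧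
    FuncOf p Z (fun ω => (X ω, Y ω)) ∧
    IndepRV p X Y ∧ IndepRV p X Z ∧ IndepRV p Y Z


/-- A network coding instance: `(n, s, edges, acc, dem)` where `n` is the number of nodes
(nodes are `0, …, n−1`), `s` is the number of source messages (messages are `0, …, s−1`),
`edges` is the list of directed edges of the multigraph (edges are indexed by their
position in the list), `acc` lists, for each node `v`, the set `C_v` of message indices
the node has access to, and `dem` lists, for each node `v`, the set `D_v` of message
indices the node demands. -/
abbrev Network : Type := ℕ × ℕ × List (ℕ × ℕ) × List (List ℕ) × List (List ℕ)

/-- The indices of the edges coming into node `v`. -/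
def inEdges (edges : List (ℕ × ℕ)) (v : ℕ) : List ℕ :=
  (List.range edges.length).filter fun e => (edges.getD e (0, 0)).2 = v

/-- The indices of the edges going out of node `v`. -/
def outEdges (edges : List (ℕ × ℕ)) (v : ℕ) : List ℕ :=
  (List.range edges.length).filter fun e => (edges.getD e (0, 0)).1 = v

/-- The network is valid: the edges join existing nodes, the directed multigraph is
acyclic (it admits a topological ranking), and the access/demand lists assign a set of
existing message indices to each node. -/
def NetworkValid : Network → Prop := fun net =>
  match net with
  | (n, s, edges, acc, dem) =>
    (∀ e ∈ edges, e.1 < n ∧ e.2 < n) ∧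
    (∃ rank : ℕ → ℕ, ∀ e ∈ edges, rank e.1 < rank e.2) ∧
    acc.length = n ∧ dem.length = n ∧
    (∀ l ∈ acc, ∀ i ∈ l, i < s) ∧ (∀ l ∈ dem, ∀ i ∈ l, i < s)

/-- The network is solvable with alphabet size `q`: there are a probability space, source
messages `M_0, …, M_{s−1}` that are i.i.d. uniform with cardinality `q`, and signals
`X_e` of cardinality at most `q` along the edges, such that at every node `v` the pair
`(M_{D_v}, X_{out(v)})` is almost surely a function of `(M_{C_v}, X_{in(v)})`. -/
def SolvableWith : Network → ℕ → Prop := fun net q =>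
  match net with
  | (n, s, edges, acc, dem) =>
    ∃ (Ω : Type) (p : Ω → ℝ), IsProb p ∧
      ∃ (M : ℕ → Ω → Fin q) (X : ℕ → Ω → Fin q),
        (∀ m : ℕ → Fin q,
          Pr p {ω | ∀ i < s, M i ω = m i} = ((q : ℝ))⁻¹ ^ s) ∧
        ∀ v < n, FuncOf p
          (fun ω => (((dem.getD v []).map fun i => M i ω),
                     (outEdges edges v).map fun e => X e ω))
          (fun ω => (((acc.getD v []).map fun i => M i ω),
                     (inEdges edges v).map fun e => X e ω))

/-- The network is solvable: it is solvable with some alphabet size `q ≥ 2`. -/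
def Solvable (net : Network) : Prop := ∃ q, 2 ≤ q ∧ SolvableWith net q

section

/-! ### Part A: networks of depth two -/

theorem UNC_pos_mem {Ω : Type} {p : Ω → ℝ} (hp : IsProb p) {S : Set Ω} (hS : Pr p S = 1)
    {ω : Ω} (hω : 0 < p ω) : ω ∈ S := by
  by_contra h
  have hsum : Summable p := by
    by_contra hns
    have h1 := hp.2
    unfold Pr at h1
    rw [tsum_univ p, tsum_eq_zero_of_not_summable hns] at h1
    exact zero_ne_one h1
  have h1 : ∑' ω, p ω = 1 := by
    have h1 := hp.2
    unfold Pr at h1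
    rwa [tsum_univ p] at h1
  have h2 : ∑' ω, S.indicator p ω = 1 := by
    rw [← tsum_subtype]; exact hS
  have h3 : ∑' ω, S.indicator p ω < ∑' ω, p ω := by
    refine (hsum.indicator S).tsum_lt_tsum (i := ω) ?_ ?_ hsum
    · intro a
      exact Set.indicator_le_self' (fun a _ => hp.1 a) a
    · rw [Set.indicator_of_notMem h]; exact hω
  linarith

theorem UNC_exists_pos {Ω : Type} {p : Ω → ℝ} (hp : IsProb p) {S : Set Ω} (hS : 0 < Pr p S) :
    ∃ ω ∈ S, 0 < p ω := by
  by_contra! h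
  have : Pr p S = 0 := by
    unfold Pr
    have : ∀ ω : S, p ω = 0 := fun ω => le_antisymm (h ω ω.2) (hp.1 ω)
    simp [this]
  linarith

theorem UNC_funcOf_elim {Ω α β : Type} {p : Ω → ℝ} (hp : IsProb p) {X : Ω → α} {Y : Ω → β}
    (h : FuncOf p X Y) {ω ω' : Ω} (h1 : 0 < p ω) (h2 : 0 < p ω') (hY : Y ω = Y ω') :
    X ω = X ω' := by
  obtain ⟨f, hf⟩ := h
  have a := UNC_pos_mem hp hf h1
  have b := UNC_pos_mem hp hf h2
  simp only [Set.mem_ofPred_eq] at a b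
  rw [a, b, hY]

theorem UNC_funcOf_intro {Ω α β : Type} [Nonempty α] {p : Ω → ℝ} (hp : IsProb p)
    {X : Ω → α} {Y : Ω → β}
    (h : ∀ ω ω', Y ω = Y ω' → X ω = X ω') : FuncOf p X Y := by
  refine ⟨fun b => if hb : ∃ ω, Y ω = b then X hb.choose else Classical.arbitrary α, ?_⟩
  have : {ω | X ω = (fun b => if hb : ∃ ω, Y ω = b then X hb.choose
      else Classical.arbitrary α) (Y ω)} = Set.univ := by
    ext ω
    simp only [Set.mem_ofPred_eq, Set.mem_univ, iff_true]
    have hb : ∃ ω', Y ω' = Y ω := ⟨ω, rfl⟩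
    rw [dif_pos hb]
    exact h _ _ hb.choose_spec.symm
  rw [this]; exact hp.2

/-- Edges of the depth-two network. -/
def UNC_edges (V : ℕ) (ds : List (List ℕ × List ℕ × List ℕ)) : List (ℕ × ℕ) :=
  (List.range V).map (fun v => (v, V + v)) ++
  (List.range ds.length).flatMap fun j => (ds.getD j ([], [], [])).1.map fun v => (V + v, 2 * V + j)

/-- The depth-two network. -/
def UNC_toNet (vs : List (List ℕ)) (ds : List (List ℕ × List ℕ × List ℕ)) : Network :=
  (2 * vs.length + ds.length, 4, UNC_edges vs.length ds,
    vs ++ (List.replicate vs.length [] ++ List.map (fun d : List ℕ × List ℕ × List ℕ => d.2.1) ds),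
    List.replicate (2 * vs.length) [] ++ List.map (fun d : List ℕ × List ℕ × List ℕ => d.2.2) ds)

def UNC_NetSol (vs : List (List ℕ)) (ds : List (List ℕ × List ℕ × List ℕ)) (q : ℕ) : Prop :=
  ∃ x : ℕ → (ℕ → Fin q) → Fin q,
    (∀ v < vs.length, ∀ m m', (∀ i ∈ vs.getD v [], m i = m' i) → x v m = x v m') ∧
    ∀ d ∈ ds, ∀ m m', (∀ v ∈ d.1, x v m = x v m') → (∀ i ∈ d.2.1, m i = m' i) →
      ∀ i ∈ d.2.2, m i = m' i

def UNC_Wf (vs : List (List ℕ)) (ds : List (List ℕ × List ℕ × List ℕ)) : Prop :=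
  (∀ l ∈ vs, ∀ i ∈ l, i < 4) ∧ ∀ d ∈ ds, (∀ v ∈ d.1, v < vs.length) ∧ (∀ i ∈ d.2.1, i < 4) ∧
    ∀ i ∈ d.2.2, i < 4

theorem UNC_mem_edges {vs : List (List ℕ)} {ds : List (List ℕ × List ℕ × List ℕ)}
    (h : UNC_Wf vs ds) {e : ℕ × ℕ} (he : e ∈ UNC_edges vs.length ds) :
    (∃ v < vs.length, e = (v, vs.length + v)) ∨
    ∃ j < ds.length, ∃ v < vs.length, v ∈ (ds.getD j ([], [], [])).1 ∧
      e = (vs.length + v, 2 * vs.length + j) := by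
  unfold UNC_edges at he
  simp only [List.mem_append, List.mem_map, List.mem_range, List.mem_flatMap] at he
  rcases he with ⟨v, hv, rfl⟩ | ⟨j, hj, v, hv, rfl⟩
  · exact Or.inl ⟨v, hv, rfl⟩
  · refine Or.inr ⟨j, hj, v, ?_, hv, rfl⟩
    have : ds.getD j ([], [], []) ∈ ds := by
      rw [List.getD_eq_getElem _ _ hj]; exact List.getElem_mem hj
    exact (h.2 _ this).1 v hv

theorem UNC_valid {vs : List (List ℕ)} {ds : List (List ℕ × List ℕ × List ℕ)}
    (h : UNC_Wf vs ds) : NetworkValid (UNC_toNet vs ds) := by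
  refine ⟨?_, ⟨id, ?_⟩, ?_, ?_, ?_, ?_⟩
  · intro e he
    rcases UNC_mem_edges h he with ⟨v, hv, rfl⟩ | ⟨j, hj, v, hv, _, rfl⟩ <;> simp <;> omega
  · intro e he
    rcases UNC_mem_edges h he with ⟨v, hv, rfl⟩ | ⟨j, hj, v, hv, _, rfl⟩ <;> simp <;> omega
  · simp; omega
  · simp
  · intro l hl i hi
    simp only [List.mem_append, List.mem_replicate, List.mem_map] at hl
    rcases hl with hl | ⟨_, rfl⟩ | ⟨d, hd, rfl⟩
    · exact h.1 l hl i hi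
    · simp at hi
    · exact (h.2 d hd).2.1 i hi
  · intro l hl i hi
    simp only [List.mem_append, List.mem_replicate, List.mem_map] at hl
    rcases hl with ⟨_, rfl⟩ | ⟨d, hd, rfl⟩
    · simp at hi
    · exact (h.2 d hd).2.2 i hi

theorem UNC_mem_in {es : List (ℕ × ℕ)} {v e : ℕ} :
    e ∈ inEdges es v ↔ e < es.length ∧ (es.getD e (0, 0)).2 = v := by
  simp [inEdges]

theorem UNC_mem_out {es : List (ℕ × ℕ)} {v e : ℕ} :
    e ∈ outEdges es v ↔ e < es.length ∧ (es.getD e (0, 0)).1 = v := by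
  simp [outEdges]

theorem UNC_edges_len (V : ℕ) (ds : List (List ℕ × List ℕ × List ℕ)) :
    V ≤ (UNC_edges V ds).length := by
  simp [UNC_edges]

theorem UNC_edges_lt {V : ℕ} {ds : List (List ℕ × List ℕ × List ℕ)} {v : ℕ} (hv : v < V) :
    (UNC_edges V ds).getD v (0, 0) = (v, V + v) := by
  unfold UNC_edges
  rw [List.getD_append _ _ _ _ (by simpa using hv), List.getD_eq_getElem _ _ (by simpa using hv)]
  simp

theorem UNC_edges_idx {V : ℕ} {ds : List (List ℕ × List ℕ × List ℕ)} {e : ℕ × ℕ}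
    (he : e ∈ UNC_edges V ds) : ∃ i < (UNC_edges V ds).length,
      (UNC_edges V ds).getD i (0, 0) = e := by
  obtain ⟨i, hi, h⟩ := List.getElem_of_mem he
  exact ⟨i, hi, by rw [List.getD_eq_getElem _ _ hi, h]⟩

theorem UNC_edges_mem {V : ℕ} {ds : List (List ℕ × List ℕ × List ℕ)} {i : ℕ}
    (hi : i < (UNC_edges V ds).length) : (UNC_edges V ds).getD i (0, 0) ∈ UNC_edges V ds := by
  rw [List.getD_eq_getElem _ _ hi]; exact List.getElem_mem hi

theorem UNC_edges_idx_of_lt {vs : List (List ℕ)} {ds : List (List ℕ × List ℕ × List ℕ)}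
    {i : ℕ} (hi : i < (UNC_edges vs.length ds).length)
    (h2 : ((UNC_edges vs.length ds).getD i (0, 0)).2 < 2 * vs.length) : i < vs.length := by
  by_contra hlt
  push Not at hlt
  unfold UNC_edges at h2 hi
  rw [List.getD_eq_getElem _ _ hi, List.getElem_append_right (by simpa using hlt)] at h2
  have hm := List.getElem_mem (l := (List.range ds.length).flatMap fun j =>
    (ds.getD j ([], [], [])).1.map fun v => (vs.length + v, 2 * vs.length + j))
    (n := i - vs.length) (by simp at hi ⊢; omega)
  simp only [List.length_map, List.length_range] at h2
  generalize ((List.range ds.length).flatMap fun j =>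
    (ds.getD j ([], [], [])).1.map fun v => (vs.length + v, 2 * vs.length + j))[i - vs.length]'_
      = e at h2 hm
  simp only [List.mem_flatMap, List.mem_map, List.mem_range] at hm
  obtain ⟨j, hj, v, hv, rfl⟩ := hm
  simp at h2

theorem UNC_acc_lt {vs : List (List ℕ)} {ds : List (List ℕ × List ℕ × List ℕ)} {v : ℕ}
    (hv : v < vs.length) :
    (vs ++ (List.replicate vs.length [] ++ List.map (fun d : List ℕ × List ℕ × List ℕ => d.2.1) ds)).getD v [] = vs.getD v [] := by
  rw [List.getD_append _ _ _ _ hv]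

theorem UNC_acc_dec {vs : List (List ℕ)} {ds : List (List ℕ × List ℕ × List ℕ)} {j : ℕ} 
    (hj : j < ds.length) :
    (vs ++ (List.replicate vs.length [] ++ List.map (fun d : List ℕ × List ℕ × List ℕ => d.2.1) ds)).getD (2 * vs.length + j) []
      = (ds.getD j ([], [], [])).2.1 := by
  rw [List.getD_append_right _ _ _ _ (by omega), List.getD_append_right _ _ _ _ (by simp; omega)]
  rw [List.getD_eq_getElem _ _ (by simp; omega), List.getD_eq_getElem _ _ hj]
  simp only [List.getElem_map, List.length_replicate]
  congr 3
  omega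

theorem UNC_acc_mid {vs : List (List ℕ)} {ds : List (List ℕ × List ℕ × List ℕ)} {v : ℕ} 
    (hj : v < vs.length) :
    (vs ++ (List.replicate vs.length [] ++ List.map (fun d : List ℕ × List ℕ × List ℕ => d.2.1) ds)).getD (vs.length + v) []
      = [] := by
  rw [List.getD_append_right _ _ _ _ (by omega), List.getD_append _ _ _ _ (by simp; omega)]
  rw [List.getD_eq_getElem _ _ (by simp; omega)]
  simp

theorem UNC_dem_lt {V : ℕ} {ds : List (List ℕ × List ℕ × List ℕ)} {v : ℕ}
    (hv : v < 2 * V) :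
    (List.replicate (2 * V) [] ++ List.map (fun d : List ℕ × List ℕ × List ℕ => d.2.2) ds).getD v [] = [] := by
  rw [List.getD_append _ _ _ _ (by simpa using hv), List.getD_eq_getElem _ _ (by simpa using hv)]
  simp

theorem UNC_dem_dec {V : ℕ} {ds : List (List ℕ × List ℕ × List ℕ)} {j : ℕ}
    (hj : j < ds.length) :
    (List.replicate (2 * V) [] ++ List.map (fun d : List ℕ × List ℕ × List ℕ => d.2.2) ds).getD (2 * V + j) [] =
      (ds.getD j ([], [], [])).2.2 := by
  rw [List.getD_append_right _ _ _ _ (by simp)]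
  rw [List.getD_eq_getElem _ _ (by simp; omega), List.getD_eq_getElem _ _ hj]
  simp

theorem UNC_net_sound {vs : List (List ℕ)} {ds : List (List ℕ × List ℕ × List ℕ)}
    (h : UNC_Wf vs ds) {q : ℕ} (hq : 0 < q) (hs : SolvableWith (UNC_toNet vs ds) q) :
    UNC_NetSol vs ds q := by
  obtain ⟨Ω, p, hp, M, X, hM, hF⟩ := hs
  have hω : ∀ m : ℕ → Fin q, ∃ ω, (∀ i < 4, M i ω = m i) ∧ 0 < p ω := by
    intro m
    have : 0 < Pr p {ω | ∀ i < 4, M i ω = m i} := by rw [hM m]; positivity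
    obtain ⟨ω, h1, h2⟩ := UNC_exists_pos hp this
    exact ⟨ω, h1, h2⟩
  choose ω hω1 hω2 using hω
  refine ⟨fun v m => X v (ω m), ?_, ?_⟩
  · intro v hv m m' hmm
    have h1 := UNC_funcOf_elim hp (hF v (by omega)) (hω2 m) (hω2 m') (by
      rw [UNC_acc_lt hv]
      refine Prod.ext ?_ ?_
      · refine List.map_congr_left fun i hi => ?_
        have hi4 : i < 4 := by
          refine h.1 (vs.getD v []) ?_ i hi
          rw [List.getD_eq_getElem _ _ hv]; exact List.getElem_mem hv
        rw [hω1 m i hi4, hω1 m' i hi4, hmm i hi]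
      · refine List.map_congr_left fun e he => ?_
        exfalso
        rw [UNC_mem_in] at he
        rcases UNC_mem_edges h (UNC_edges_mem he.1) with ⟨v', hv', h'⟩ | ⟨j, hj, v', hv', _, h'⟩ <;>
          rw [h'] at he <;> simp at he <;> omega)
    have h2 := (List.map_inj_left.1 (Prod.ext_iff.1 h1).2) v (by
      rw [UNC_mem_out, UNC_edges_lt hv]
      exact ⟨lt_of_lt_of_le hv (UNC_edges_len _ _), rfl⟩)
    exact h2
  · intro d hd m m' hx ha i hi
    obtain ⟨j, hj, rfl⟩ := List.getElem_of_mem hd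
    have hjd : ds.getD j ([], [], []) = ds[j] := List.getD_eq_getElem _ _ hj
    have h1 := UNC_funcOf_elim hp (hF (2 * vs.length + j) (by omega)) (hω2 m) (hω2 m') (by
      rw [UNC_acc_dec hj, hjd]
      refine Prod.ext ?_ ?_
      · refine List.map_congr_left fun i hi => ?_
        have hi4 : i < 4 := (h.2 _ hd).2.1 i hi
        rw [hω1 m i hi4, hω1 m' i hi4, ha i hi]
      · refine List.map_congr_left fun e he => ?_
        rw [UNC_mem_in] at he
        rcases UNC_mem_edges h (UNC_edges_mem he.1) with ⟨v', hv', h'⟩ | ⟨j', hj', v', hv', hvd, h'⟩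
        · rw [h'] at he; simp at he; omega
        · have hjj : j' = j := by rw [h'] at he; simp at he; omega
          subst hjj
          have h3 := UNC_funcOf_elim hp (hF (vs.length + v') (by omega)) (hω2 m) (hω2 m') (by
            rw [UNC_acc_mid hv']
            refine Prod.ext rfl ?_
            refine List.map_congr_left fun e he => ?_
            rw [UNC_mem_in] at he
            have hlt := UNC_edges_idx_of_lt he.1 (by omega)
            rw [UNC_edges_lt hlt] at he
            have : e = v' := by simp at he; omega
            subst this
            exact hx e (hjd ▸ hvd))
          have h4 := (List.map_inj_left.1 (Prod.ext_iff.1 h3).2) e (by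
            rw [UNC_mem_out]; exact ⟨he.1, by rw [h']⟩)
          exact h4)
    have h2 := List.map_inj_left.1 (Prod.ext_iff.1 h1).1 i (by
      rw [UNC_dem_dec hj, hjd]; exact hi)
    have hi4 : i < 4 := (h.2 _ hd).2.2 i hi
    rw [hω1 m i hi4, hω1 m' i hi4] at h2
    exact h2

theorem UNC_net_complete {vs : List (List ℕ)} {ds : List (List ℕ × List ℕ × List ℕ)}
    (h : UNC_Wf vs ds) {q : ℕ} (hq : 0 < q) (hs : UNC_NetSol vs ds q) :
    SolvableWith (UNC_toNet vs ds) q := by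
  obtain ⟨x, hx1, hx2⟩ := hs
  have : NeZero q := ⟨by omega⟩
  have hprob : IsProb (fun _ : Fin 4 → Fin q => ((q : ℝ))⁻¹ ^ 4) := by
    refine ⟨fun _ => by positivity, ?_⟩
    unfold Pr
    rw [tsum_univ (fun _ : Fin 4 → Fin q => ((q : ℝ))⁻¹ ^ 4), tsum_fintype]
    simp
  let M : ℕ → (Fin 4 → Fin q) → Fin q := fun i ω => if hi : i < 4 then ω ⟨i, hi⟩ else 0
  let src : ℕ → ℕ := fun e =>
    let s := ((UNC_edges vs.length ds).getD e (0, 0)).1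
    if s < vs.length then s else s - vs.length
  refine ⟨Fin 4 → Fin q, _, hprob, M, fun e ω => x (src e) (fun i => M i ω), ?_, ?_⟩
  · intro m
    have : {ω : Fin 4 → Fin q | ∀ i < 4, M i ω = m i} = {(fun i : Fin 4 => m i : Fin 4 → Fin q)} := by
      ext ω
      simp only [Set.mem_ofPred_eq, Set.mem_singleton_iff]
      constructor
      · intro hh
        funext i
        have := hh i i.2
        simpa [M] using this
      · rintro rfl i hi
        simp [M, hi]
    rw [this]
    unfold Pr
    rw [tsum_fintype]
    simp
  · intro v hv
    refine UNC_funcOf_intro hprob ?_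
    intro ω ω' hY
    have hA := List.map_inj_left.1 (Prod.ext_iff.1 hY).1
    have hI := List.map_inj_left.1 (Prod.ext_iff.1 hY).2
    clear hY
    rcases lt_or_ge v vs.length with h1 | h1
    · rw [UNC_acc_lt h1] at hA
      rw [UNC_dem_lt (by omega)]
      refine Prod.ext rfl ?_
      refine List.map_congr_left fun e he => ?_
      rw [UNC_mem_out] at he
      have hse : src e = v := by simp only [src]; rw [he.2, if_pos h1]
      simp only [hse]
      exact hx1 v h1 _ _ hA
    rcases lt_or_ge v (2 * vs.length) with h2 | h2
    · rw [UNC_dem_lt h2]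
      refine Prod.ext rfl ?_
      refine List.map_congr_left fun e he => ?_
      rw [UNC_mem_out] at he
      have hse : src e = v - vs.length := by simp only [src]; rw [he.2, if_neg (by omega)]
      have hlt : v - vs.length < vs.length := by omega
      have hee := hI (v - vs.length) (by
        rw [UNC_mem_in, UNC_edges_lt hlt]
        exact ⟨lt_of_lt_of_le hlt (UNC_edges_len _ _), by simp; omega⟩)
      have hse' : src (v - vs.length) = v - vs.length := by
        simp only [src]; rw [UNC_edges_lt hlt, if_pos hlt]
      simp only [hse'] at hee
      simp only [hse]
      exact hee
    · obtain ⟨j, rfl⟩ := Nat.exists_eq_add_of_le h2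
      have hj : j < ds.length := by omega
      rw [UNC_acc_dec hj] at hA
      rw [UNC_dem_dec hj]
      have hjd : ds.getD j ([], [], []) = ds[j] := List.getD_eq_getElem _ _ hj
      have hmem : ds.getD j ([], [], []) ∈ ds := by rw [hjd]; exact List.getElem_mem hj
      refine Prod.ext ?_ ?_
      · refine List.map_congr_left fun i hi => ?_
        refine hx2 _ hmem (fun i => M i ω) (fun i => M i ω') ?_ hA i hi
        intro v hv
        have hvl := (h.2 _ hmem).1 v hv
        have he : (vs.length + v, 2 * vs.length + j) ∈ UNC_edges vs.length ds := by
          unfold UNC_edges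
          simp only [List.mem_append, List.mem_map, List.mem_range, List.mem_flatMap]
          exact Or.inr ⟨j, hj, v, hv, rfl⟩
        obtain ⟨e, he1, he2⟩ := UNC_edges_idx he
        have hee := hI e (by rw [UNC_mem_in, he2]; exact ⟨he1, rfl⟩)
        have hse : src e = v := by
          simp only [src]; rw [he2, if_neg (by simp)]; simp
        simp only [hse] at hee
        exact hee
      · refine List.map_congr_left fun e he => ?_
        exfalso
        rw [UNC_mem_out] at he
        rcases UNC_mem_edges h (UNC_edges_mem he.1) with ⟨v', hv', h'⟩ | ⟨j, hj, v', hv', _, h'⟩ <;>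
          rw [h'] at he <;> simp at he <;> omega

end

section

/-! ### Part B: group equations `g_a g_b = g_c g_d` -/

abbrev UNC_Quad := ℕ × ℕ × ℕ × ℕ

def UNC_qVs (K : ℕ) (qs : List UNC_Quad) : List (List ℕ) :=
  ((List.range (2 * K)).map fun i => if i % 2 = 0 then [0, 1] else [1, 2]) ++
    (qs.map (fun _ => [0, 2, 3]) ++ [[0, 2]])

def UNC_qDs (K : ℕ) (qs : List UNC_Quad) (w : ℕ) : List (List ℕ × List ℕ × List ℕ) :=
  ((List.range K).flatMap fun g => [([2 * g], [0], [1]), ([2 * g], [1], [0]),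
      ([2 * g + 1], [1], [2]), ([2 * g + 1], [2], [1])]) ++
  (((List.range qs.length).flatMap fun j =>
      [([2 * K + j], [0, 3], [2]),
       ([2 * (qs.getD j (0, 0, 0, 0)).2.1, 2 * (qs.getD j (0, 0, 0, 0)).1 + 1, 2 * K + j], [], [3]),
       ([2 * (qs.getD j (0, 0, 0, 0)).2.2.2, 2 * (qs.getD j (0, 0, 0, 0)).2.2.1 + 1, 2 * K + j],
          [], [3])]) ++
   [([0, 2 * w, 2 * K + qs.length], [], [0]), ([1, 2 * w + 1, 2 * K + qs.length], [], [2])])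

def UNC_qWf (K : ℕ) (qs : List UNC_Quad) (w : ℕ) : Prop :=
  w < K ∧ ∀ t ∈ qs, t.1 < K ∧ t.2.1 < K ∧ t.2.2.1 < K ∧ t.2.2.2 < K

structure UNC_QSol (K : ℕ) (qs : List UNC_Quad) (w : ℕ) (A : Type) where
  B : ℕ → A → A → A
  C : ℕ → A → A → A
  E : ℕ → A → A → A → A
  W : A → A → A
  h1 : ∀ g < K, ∀ a b b', B g a b = B g a b' → b = b'
  h2 : ∀ g < K, ∀ a a' b, B g a b = B g a' b → a = a'
  h3 : ∀ g < K, ∀ a b b', C g a b = C g a b' → b = b'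
  h4 : ∀ g < K, ∀ a a' b, C g a b = C g a' b → a = a'
  h5 : ∀ j < qs.length, ∀ a c c' d, E j a c d = E j a c' d → c = c'
  h6 : ∀ j < qs.length, ∀ x1 x2 x3 x4 y1 y2 y3 y4,
    B (qs.getD j (0, 0, 0, 0)).2.1 x1 x2 = B (qs.getD j (0, 0, 0, 0)).2.1 y1 y2 →
    C (qs.getD j (0, 0, 0, 0)).1 x2 x3 = C (qs.getD j (0, 0, 0, 0)).1 y2 y3 →
    E j x1 x3 x4 = E j y1 y3 y4 → x4 = y4
  h7 : ∀ j < qs.length, ∀ x1 x2 x3 x4 y1 y2 y3 y4,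
    B (qs.getD j (0, 0, 0, 0)).2.2.2 x1 x2 = B (qs.getD j (0, 0, 0, 0)).2.2.2 y1 y2 →
    C (qs.getD j (0, 0, 0, 0)).2.2.1 x2 x3 = C (qs.getD j (0, 0, 0, 0)).2.2.1 y2 y3 →
    E j x1 x3 x4 = E j y1 y3 y4 → x4 = y4
  h8 : ∀ x1 x2 x3 y1 y2 y3, B 0 x1 x2 = B 0 y1 y2 → B w x1 x2 = B w y1 y2 →
    W x1 x3 = W y1 y3 → x1 = y1
  h9 : ∀ x1 x2 x3 y1 y2 y3, C 0 x2 x3 = C 0 y2 y3 → C w x2 x3 = C w y2 y3 →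
    W x1 x3 = W y1 y3 → x3 = y3

theorem UNC_qVs_len (K : ℕ) (qs : List UNC_Quad) :
    (UNC_qVs K qs).length = 2 * K + qs.length + 1 := by
  simp [UNC_qVs]; omega

theorem UNC_qVs_B {K g : ℕ} (qs : List UNC_Quad) (hg : g < K) :
    (UNC_qVs K qs).getD (2 * g) [] = [0, 1] := by
  unfold UNC_qVs
  rw [List.getD_append _ _ _ _ (by simp; omega), List.getD_eq_getElem _ _ (by simp; omega)]
  simp

theorem UNC_qVs_C {K g : ℕ} (qs : List UNC_Quad) (hg : g < K) :
    (UNC_qVs K qs).getD (2 * g + 1) [] = [1, 2] := by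
  unfold UNC_qVs
  rw [List.getD_append _ _ _ _ (by simp; omega), List.getD_eq_getElem _ _ (by simp; omega)]
  simp

theorem UNC_qVs_E {K j : ℕ} (qs : List UNC_Quad) (hg : j < qs.length) :
    (UNC_qVs K qs).getD (2 * K + j) [] = [0, 2, 3] := by
  unfold UNC_qVs
  rw [List.getD_append_right _ _ _ _ (by simp), List.getD_append _ _ _ _ (by simp; omega),
    List.getD_eq_getElem _ _ (by simp; omega)]
  simp

theorem UNC_qVs_W {K : ℕ} (qs : List UNC_Quad) :
    (UNC_qVs K qs).getD (2 * K + qs.length) [] = [0, 2] := by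
  unfold UNC_qVs
  rw [List.getD_append_right _ _ _ _ (by simp), List.getD_append_right _ _ _ _ (by simp)]
  simp

theorem UNC_q_getD_wf {K : ℕ} {qs : List UNC_Quad} {w : ℕ} (h : UNC_qWf K qs w) {j : ℕ}
    (hj : j < qs.length) : 
    (qs.getD j (0, 0, 0, 0)).1 < K ∧ (qs.getD j (0, 0, 0, 0)).2.1 < K ∧
    (qs.getD j (0, 0, 0, 0)).2.2.1 < K ∧ (qs.getD j (0, 0, 0, 0)).2.2.2 < K := by
  have : qs.getD j (0, 0, 0, 0) ∈ qs := by
    rw [List.getD_eq_getElem _ _ hj]; exact List.getElem_mem hj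
  exact h.2 _ this

theorem UNC_q_wf {K : ℕ} {qs : List UNC_Quad} {w : ℕ} (h : UNC_qWf K qs w) :
    UNC_Wf (UNC_qVs K qs) (UNC_qDs K qs w) := by
  refine ⟨?_, ?_⟩
  · intro l hl i hi
    unfold UNC_qVs at hl
    simp only [List.mem_append, List.mem_map, List.mem_singleton, List.mem_range] at hl
    rcases hl with ⟨j, _, rfl⟩ | ⟨_, _, rfl⟩ | rfl
    · split_ifs at hi <;> simp at hi <;> omega
    · simp at hi; omega
    · simp at hi; omega
  · intro d hd
    rw [UNC_qVs_len]
    have hw := h.1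
    unfold UNC_qDs at hd
    simp only [List.mem_append, List.mem_flatMap, List.mem_range, List.mem_cons,
      List.not_mem_nil, or_false] at hd
    rcases hd with ⟨g, hg, hd⟩ | ⟨j, hj, hd⟩ | hd
    · rcases hd with rfl | rfl | rfl | rfl <;> simp <;> omega
    · have := UNC_q_getD_wf h hj
      revert hd this
      generalize qs.getD j (0, 0, 0, 0) = t
      intro hd this
      rcases hd with rfl | rfl | rfl <;> simp <;> omega
    · rcases hd with rfl | rfl <;> simp <;> omega

/-- four messages as a function on indices -/
def UNC_mk {A : Type} (a b c d : A) : ℕ → A := fun i =>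
  if i = 0 then a else if i = 1 then b else if i = 2 then c else d

@[simp] theorem UNC_mk0 {A : Type} (a b c d : A) : UNC_mk a b c d 0 = a := rfl
@[simp] theorem UNC_mk1 {A : Type} (a b c d : A) : UNC_mk a b c d 1 = b := rfl
@[simp] theorem UNC_mk2 {A : Type} (a b c d : A) : UNC_mk a b c d 2 = c := rfl
@[simp] theorem UNC_mk3 {A : Type} (a b c d : A) : UNC_mk a b c d 3 = d := rfl

theorem UNC_qsol_of_net {K : ℕ} {qs : List UNC_Quad} {w : ℕ} (h : UNC_qWf K qs w) {q : ℕ}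
    (hq : 0 < q) (hs : UNC_NetSol (UNC_qVs K qs) (UNC_qDs K qs w) q) :
    Nonempty (UNC_QSol K qs w (Fin q)) := by
  obtain ⟨x, hx1, hx2⟩ := hs
  have hlen := UNC_qVs_len K qs
  have hw := h.1
  let o : Fin q := ⟨0, hq⟩
  have eB : ∀ g < K, ∀ a b c d, x (2 * g) (UNC_mk a b c d) = x (2 * g) (UNC_mk a b o o) := by
    intro g hg a b c d
    refine hx1 _ (by omega) _ _ ?_
    rw [UNC_qVs_B qs hg]; simp
  have eC : ∀ g < K, ∀ a b c d,
      x (2 * g + 1) (UNC_mk a b c d) = x (2 * g + 1) (UNC_mk o b c o) := by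
    intro g hg a b c d
    refine hx1 _ (by omega) _ _ ?_
    rw [UNC_qVs_C qs hg]; simp
  have eE : ∀ j < qs.length, ∀ a b c d,
      x (2 * K + j) (UNC_mk a b c d) = x (2 * K + j) (UNC_mk a o c d) := by
    intro g hg a b c d
    refine hx1 _ (by omega) _ _ ?_
    rw [UNC_qVs_E qs hg]; simp
  have eW : ∀ a b c d,
      x (2 * K + qs.length) (UNC_mk a b c d) = x (2 * K + qs.length) (UNC_mk a o c o) := by
    intro a b c d
    refine hx1 _ (by omega) _ _ ?_
    rw [UNC_qVs_W qs]; simp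
  have mg : ∀ g < K, ∀ d ∈ [([2 * g], [0], [1]), ([2 * g], [1], [0]),
      ([2 * g + 1], [1], [2]), ([2 * g + 1], [2], [1])], d ∈ UNC_qDs K qs w := by
    intro g hg d hd
    unfold UNC_qDs
    exact List.mem_append_left _ (List.mem_flatMap.2 ⟨g, List.mem_range.2 hg, hd⟩)
  have mj : ∀ j < qs.length, ∀ d ∈ [([2 * K + j], [0, 3], [2]),
       ([2 * (qs.getD j (0, 0, 0, 0)).2.1, 2 * (qs.getD j (0, 0, 0, 0)).1 + 1, 2 * K + j], [], [3]),
       ([2 * (qs.getD j (0, 0, 0, 0)).2.2.2, 2 * (qs.getD j (0, 0, 0, 0)).2.2.1 + 1, 2 * K + j],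
          [], [3])], d ∈ UNC_qDs K qs w := by
    intro g hg d hd
    unfold UNC_qDs
    exact List.mem_append_right _ (List.mem_append_left _
      (List.mem_flatMap.2 ⟨g, List.mem_range.2 hg, hd⟩))
  have mw : ∀ d ∈ [([0, 2 * w, 2 * K + qs.length], [], [0]),
      ([1, 2 * w + 1, 2 * K + qs.length], [], [2])], d ∈ UNC_qDs K qs w := by
    intro d hd
    unfold UNC_qDs
    exact List.mem_append_right _ (List.mem_append_right _ hd)
  refine ⟨⟨fun g a b => x (2 * g) (UNC_mk a b o o), fun g b c => x (2 * g + 1) (UNC_mk o b c o),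
    fun j a c d => x (2 * K + j) (UNC_mk a o c d),
    fun a c => x (2 * K + qs.length) (UNC_mk a o c o), ?_, ?_, ?_, ?_, ?_, ?_, ?_, ?_, ?_⟩⟩
  · intro g hg a b b' hh
    have := hx2 _ (mg g hg ([2 * g], [0], [1]) (by simp)) (UNC_mk a b o o) (UNC_mk a b' o o)
      (by simpa using hh) (by simp) 1 (by simp)
    simpa using this
  · intro g hg a b b' hh
    have := hx2 _ (mg g hg ([2 * g], [1], [0]) (by simp)) (UNC_mk a b' o o) (UNC_mk b b' o o)
      (by simpa using hh) (by simp) 0 (by simp)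
    simpa using this
  · intro g hg a b b' hh
    have := hx2 _ (mg g hg ([2 * g + 1], [1], [2]) (by simp)) (UNC_mk o a b o) (UNC_mk o a b' o)
      (by simpa using hh) (by simp) 2 (by simp)
    simpa using this
  · intro g hg a b b' hh
    have := hx2 _ (mg g hg ([2 * g + 1], [2], [1]) (by simp)) (UNC_mk o a b' o) (UNC_mk o b b' o)
      (by simpa using hh) (by simp) 1 (by simp)
    simpa using this
  · intro j hj a c c' d hh
    have := hx2 _ (mj j hj ([2 * K + j], [0, 3], [2]) (by simp)) (UNC_mk a o c d) (UNC_mk a o c' d)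
      (by simpa using hh) (by simp) 2 (by simp)
    simpa using this
  · intro j hj x1 x2 x3 x4 y1 y2 y3 y4 hb hc he
    have hwf := UNC_q_getD_wf h hj
    have := hx2 _ (mj j hj _ (List.mem_cons_of_mem _ (List.mem_cons_self)))
      (UNC_mk x1 x2 x3 x4) (UNC_mk y1 y2 y3 y4)
      (by
        intro v hv
        simp only [List.mem_cons, List.not_mem_nil, or_false] at hv
        rcases hv with rfl | rfl | rfl
        · exact (eB _ hwf.2.1 _ _ _ _).trans (hb.trans (eB _ hwf.2.1 _ _ _ _).symm)
        · exact (eC _ hwf.1 _ _ _ _).trans (hc.trans (eC _ hwf.1 _ _ _ _).symm)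
        · exact (eE _ hj _ _ _ _).trans (he.trans (eE _ hj _ _ _ _).symm)) (by simp) 3 (by simp)
    simpa using this
  · intro j hj x1 x2 x3 x4 y1 y2 y3 y4 hb hc he
    have hwf := UNC_q_getD_wf h hj
    have := hx2 _ (mj j hj _ (List.mem_cons_of_mem _ (List.mem_cons_of_mem _ (List.mem_cons_self))))
      (UNC_mk x1 x2 x3 x4) (UNC_mk y1 y2 y3 y4)
      (by
        intro v hv
        simp only [List.mem_cons, List.not_mem_nil, or_false] at hv
        rcases hv with rfl | rfl | rfl
        · exact (eB _ hwf.2.2.2 _ _ _ _).trans (hb.trans (eB _ hwf.2.2.2 _ _ _ _).symm)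
        · exact (eC _ hwf.2.2.1 _ _ _ _).trans (hc.trans (eC _ hwf.2.2.1 _ _ _ _).symm)
        · exact (eE _ hj _ _ _ _).trans (he.trans (eE _ hj _ _ _ _).symm)) (by simp) 3 (by simp)
    simpa using this
  · intro x1 x2 x3 y1 y2 y3 hb hc he
    have := hx2 _ (mw _ (List.mem_cons_self)) (UNC_mk x1 x2 x3 o) (UNC_mk y1 y2 y3 o)
      (by
        intro v hv
        simp only [List.mem_cons, List.not_mem_nil, or_false] at hv
        rcases hv with rfl | rfl | rfl
        · have e := eB 0 (by omega)
          simp only [mul_zero] at e hb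
          exact (e _ _ _ _).trans (hb.trans (e _ _ _ _).symm)
        · exact (eB _ hw _ _ _ _).trans (hc.trans (eB _ hw _ _ _ _).symm)
        · exact (eW _ _ _ _).trans (he.trans (eW _ _ _ _).symm)) (by simp) 0 (by simp)
    simpa using this
  · intro x1 x2 x3 y1 y2 y3 hb hc he
    have := hx2 _ (mw _ (List.mem_cons_of_mem _ List.mem_cons_self)) (UNC_mk x1 x2 x3 o)
      (UNC_mk y1 y2 y3 o)
      (by
        intro v hv
        simp only [List.mem_cons, List.not_mem_nil, or_false] at hv
        rcases hv with rfl | rfl | rfl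
        · have e := eC 0 (by omega)
          simp only [mul_zero, zero_add] at e hb
          exact (e _ _ _ _).trans (hb.trans (e _ _ _ _).symm)
        · exact (eC _ hw _ _ _ _).trans (hc.trans (eC _ hw _ _ _ _).symm)
        · exact (eW _ _ _ _).trans (he.trans (eW _ _ _ _).symm)) (by simp) 2 (by simp)
    simpa using this

theorem UNC_net_of_qsol {K : ℕ} {qs : List UNC_Quad} {w : ℕ} (h : UNC_qWf K qs w) {q : ℕ}
    {A : Type} (eq : A ≃ Fin q) (S : UNC_QSol K qs w A) :
    UNC_NetSol (UNC_qVs K qs) (UNC_qDs K qs w) q := by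
  have hw := h.1
  let r : Fin q → A := eq.symm
  let x : ℕ → (ℕ → Fin q) → Fin q := fun v m => eq <|
    if v < 2 * K then (if v % 2 = 0 then S.B (v / 2) (r (m 0)) (r (m 1))
      else S.C (v / 2) (r (m 1)) (r (m 2)))
    else if v < 2 * K + qs.length then S.E (v - 2 * K) (r (m 0)) (r (m 2)) (r (m 3))
    else S.W (r (m 0)) (r (m 2))
  have xB : ∀ g < K, ∀ m, x (2 * g) m = eq (S.B g (r (m 0)) (r (m 1))) := by
    intro g hg m
    simp only [x]
    rw [if_pos (by omega), if_pos (by omega)]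
    congr 2
    omega
  have xC : ∀ g < K, ∀ m, x (2 * g + 1) m = eq (S.C g (r (m 1)) (r (m 2))) := by
    intro g hg m
    simp only [x]
    rw [if_pos (by omega), if_neg (by omega)]
    congr 2
    omega
  have xE : ∀ j < qs.length, ∀ m, x (2 * K + j) m = eq (S.E j (r (m 0)) (r (m 2)) (r (m 3))) := by
    intro g hg m
    simp only [x]
    rw [if_neg (by omega), if_pos (by omega)]
    congr 2
    omega
  have xW : ∀ m, x (2 * K + qs.length) m = eq (S.W (r (m 0)) (r (m 2))) := by
    intro m
    simp only [x]
    rw [if_neg (by omega), if_neg (by omega)]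
  have rinj : Function.Injective r := eq.symm.injective
  refine ⟨x, ?_, ?_⟩
  · intro v hv m m' hm
    rw [UNC_qVs_len] at hv
    rcases lt_or_ge v (2 * K) with h1 | h1
    · rcases Nat.even_or_odd' v with ⟨g, rfl | rfl⟩
      · rw [UNC_qVs_B qs (by omega)] at hm
        rw [xB _ (by omega), xB _ (by omega), hm 0 (by simp), hm 1 (by simp)]
      · rw [UNC_qVs_C qs (by omega)] at hm
        rw [xC _ (by omega), xC _ (by omega), hm 1 (by simp), hm 2 (by simp)]
    obtain ⟨j, rfl⟩ := Nat.exists_eq_add_of_le h1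
    rcases lt_or_ge j qs.length with h2 | h2
    · rw [UNC_qVs_E qs h2] at hm
      rw [xE _ h2, xE _ h2, hm 0 (by simp), hm 2 (by simp), hm 3 (by simp)]
    · have : j = qs.length := by omega
      subst this
      rw [UNC_qVs_W qs] at hm
      rw [xW, xW, hm 0 (by simp), hm 2 (by simp)]
  · intro d hd m m' hv ha
    unfold UNC_qDs at hd
    simp only [List.mem_append, List.mem_flatMap, List.mem_range, List.mem_cons,
      List.not_mem_nil, or_false] at hd
    rcases hd with ⟨g, hg, hd⟩ | ⟨j, hj, hd⟩ | hd
    · rcases hd with rfl | rfl | rfl | rfl <;> simp [xB _ hg, xC _ hg] at hv ha ⊢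
      · rw [ha] at hv; exact rinj (S.h1 _ hg _ _ _ hv)
      · rw [ha] at hv; exact rinj (S.h2 _ hg _ _ _ hv)
      · rw [ha] at hv; exact rinj (S.h3 _ hg _ _ _ hv)
      · rw [ha] at hv; exact rinj (S.h4 _ hg _ _ _ hv)
    · have hwf := UNC_q_getD_wf h hj
      rcases hd with rfl | rfl | rfl <;>
        simp only [List.mem_cons, List.not_mem_nil, or_false, forall_eq_or_imp, forall_eq] at hv ha ⊢
      · rw [xE _ hj, xE _ hj, ha.1, ha.2] at hv
        exact rinj (S.h5 _ hj _ _ _ _ (eq.injective hv))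
      · rw [xB _ hwf.2.1, xB _ hwf.2.1, xC _ hwf.1, xC _ hwf.1, xE _ hj, xE _ hj] at hv
        exact rinj (S.h6 _ hj _ _ _ _ _ _ _ _ (eq.injective hv.1) (eq.injective hv.2.1)
          (eq.injective hv.2.2))
      · rw [xB _ hwf.2.2.2, xB _ hwf.2.2.2, xC _ hwf.2.2.1, xC _ hwf.2.2.1, xE _ hj, xE _ hj] at hv
        exact rinj (S.h7 _ hj _ _ _ _ _ _ _ _ (eq.injective hv.1) (eq.injective hv.2.1)
          (eq.injective hv.2.2))
    · have e0 := xB 0 (by omega)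
      have e1 := xC 0 (by omega)
      simp only [mul_zero, zero_add] at e0 e1
      rcases hd with rfl | rfl <;>
        simp only [List.mem_cons, List.not_mem_nil, or_false, forall_eq_or_imp, forall_eq] at hv ha ⊢
      · rw [e0, e0, xB _ hw, xB _ hw, xW, xW] at hv
        exact rinj (S.h8 _ _ _ _ _ _ (eq.injective hv.1) (eq.injective hv.2.1)
          (eq.injective hv.2.2))
      · rw [e1, e1, xC _ hw, xC _ hw, xW, xW] at hv
        exact rinj (S.h9 _ _ _ _ _ _ (eq.injective hv.1) (eq.injective hv.2.1)
          (eq.injective hv.2.2))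

theorem UNC_perm_of_latin {A : Type} [Finite A] (B : A → A → A) (o : A)
    (h1 : ∀ a b b', B a b = B a b' → b = b') (h2 : ∀ a a' b, B a b = B a' b → a = a') :
    ∃ φ : Equiv.Perm A, φ o = o ∧ ∀ a, B a (φ a) = B o o := by
  have hs : ∀ a, ∃ b, B a b = B o o := fun a =>
    (Finite.injective_iff_surjective.1 (fun b b' => h1 a b b')) _
  choose f hf using hs
  have hinj : Function.Injective f := fun a a' haa => h2 a a' (f a) (by
    rw [hf a, haa, hf a'])
  refine ⟨Equiv.ofBijective f (Finite.injective_iff_bijective.1 hinj), ?_, fun a => hf a⟩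
  exact h1 o _ _ (hf o)

theorem UNC_q_sound {K : ℕ} {qs : List UNC_Quad} {w : ℕ} (h : UNC_qWf K qs w)
    (ht : ∀ g < K, (g, 0, 0, g) ∈ qs) {A : Type} [Finite A] [Nontrivial A]
    (S : UNC_QSol K qs w A) :
    ∃ g : ℕ → Equiv.Perm A, g 0 = 1 ∧
      (∀ t ∈ qs, g t.1 * g t.2.1 = g t.2.2.1 * g t.2.2.2) ∧ g w ≠ 1 := by
  have hw := h.1
  obtain ⟨o⟩ : Nonempty A := inferInstance
  have hφ : ∀ g, ∃ φ : Equiv.Perm A, g < K → φ o = o ∧ ∀ a, S.B g a (φ a) = S.B g o o := by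
    intro g
    by_cases hg : g < K
    · obtain ⟨φ, hh⟩ := UNC_perm_of_latin (S.B g) o (S.h1 g hg) (S.h2 g hg)
      exact ⟨φ, fun _ => hh⟩
    · exact ⟨1, fun h => absurd h hg⟩
  have hψ : ∀ g, ∃ φ : Equiv.Perm A, g < K → φ o = o ∧ ∀ a, S.C g a (φ a) = S.C g o o := by
    intro g
    by_cases hg : g < K
    · obtain ⟨φ, hh⟩ := UNC_perm_of_latin (S.C g) o (S.h3 g hg) (S.h4 g hg)
      exact ⟨φ, fun _ => hh⟩
    · exact ⟨1, fun h => absurd h hg⟩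
  choose φ hφ using hφ
  choose ψ hψ using hψ
  have key : ∀ (E : A → A → A → A) (π : Equiv.Perm A), π o = o →
      (∀ x x' y y', E x (π x) y = E x' (π x') y' → y = y') → ∀ x, E x (π x) o = E o o o := by
    intro E π hπ hE x
    have hb := Finite.injective_iff_surjective.1 (fun b b' => hE o o b b')
    obtain ⟨y, hy⟩ := hb (E x (π x) o)
    have := hE _ _ _ _ hy
    subst this
    rw [← hy, hπ]
  have hquad : ∀ t ∈ qs, ψ t.1 * φ t.2.1 = ψ t.2.2.1 * φ t.2.2.2 := by
    intro t htq
    obtain ⟨j, hj, rfl⟩ := List.getElem_of_mem htq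
    have hjd : qs.getD j (0, 0, 0, 0) = qs[j] := List.getD_eq_getElem _ _ hj
    have hwf := h.2 _ htq
    have h6 := S.h6 j hj
    have h7 := S.h7 j hj
    rw [hjd] at h6 h7
    ext x
    have k1 := key (S.E j) (ψ qs[j].1 * φ qs[j].2.1) (by simp [hψ _ hwf.1, hφ _ hwf.2.1])
      (fun x x' y y' he => h6 x (φ qs[j].2.1 x) _ y x' (φ qs[j].2.1 x') _ y'
        (by rw [(hφ _ hwf.2.1).2, (hφ _ hwf.2.1).2])
        (((hψ _ hwf.1).2 _).trans ((hψ _ hwf.1).2 _).symm) he) x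
    have k2 := key (S.E j) (ψ qs[j].2.2.1 * φ qs[j].2.2.2)
      (by simp [hψ _ hwf.2.2.1, hφ _ hwf.2.2.2])
      (fun x x' y y' he => h7 x (φ qs[j].2.2.2 x) _ y x' (φ qs[j].2.2.2 x') _ y'
        (by rw [(hφ _ hwf.2.2.2).2, (hφ _ hwf.2.2.2).2])
        (((hψ _ hwf.2.2.1).2 _).trans ((hψ _ hwf.2.2.1).2 _).symm) he) x
    exact S.h5 j hj _ _ _ _ (k1.trans k2.symm)
  have htie : ∀ g < K, (ψ 0)⁻¹ * ψ g = φ g * (φ 0)⁻¹ := by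
    intro g hg
    have := hquad _ (ht g hg)
    simp only at this
    rw [inv_mul_eq_iff_eq_mul, ← mul_assoc, ← this]
    group
  refine ⟨fun g => (ψ 0)⁻¹ * ψ g, by simp, ?_, ?_⟩
  · intro t htq
    have hwf := h.2 _ htq
    have := hquad t htq
    simp only
    rw [htie _ hwf.2.1, htie _ hwf.2.2.2]
    calc (ψ 0)⁻¹ * ψ t.1 * (φ t.2.1 * (φ 0)⁻¹) = (ψ 0)⁻¹ * (ψ t.1 * φ t.2.1) * (φ 0)⁻¹ := by group
      _ = (ψ 0)⁻¹ * (ψ t.2.2.1 * φ t.2.2.2) * (φ 0)⁻¹ := by rw [this]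
      _ = _ := by group
  · intro hw1
    simp only at hw1
    have e1 : ψ w = ψ 0 := (inv_mul_eq_one.1 hw1).symm
    have e2 : φ w = φ 0 := by
      rw [htie w hw] at hw1
      exact mul_inv_eq_one.1 hw1
    have h0 : 0 < K := by omega
    have c1 : ∀ x1 x3 y1 y3, S.W x1 x3 = S.W y1 y3 → x1 = y1 := by
      intro x1 x3 y1 y3 hW
      refine S.h8 x1 (φ 0 x1) x3 y1 (φ 0 y1) y3 ?_ ?_ hW
      · rw [(hφ 0 h0).2, (hφ 0 h0).2]
      · rw [← e2, (hφ w hw).2, (hφ w hw).2]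
    have c2 : ∀ x1 x3 y1 y3, S.W x1 x3 = S.W y1 y3 → x3 = y3 := by
      intro x1 x3 y1 y3 hW
      obtain ⟨x2, rfl⟩ := (ψ 0).surjective x3
      obtain ⟨y2, rfl⟩ := (ψ 0).surjective y3
      refine S.h9 x1 x2 _ y1 y2 _ ?_ ?_ hW
      · rw [(hψ 0 h0).2, (hψ 0 h0).2]
      · rw [← e1, (hψ w hw).2, (hψ w hw).2]
    have hinj : Function.Injective (fun z : A × A => S.W z.1 z.2) := fun z z' hz =>
      Prod.ext (c1 _ _ _ _ hz) (c2 _ _ _ _ hz)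
    have hcard := Nat.card_le_card_of_injective _ hinj
    rw [Nat.card_prod] at hcard
    have : 1 < Nat.card A := Finite.one_lt_card
    nlinarith

theorem UNC_q_complete {K : ℕ} {qs : List UNC_Quad} {w : ℕ} {c : ℕ}
    {G : Type} [Group G] [Fintype G] (g : ℕ → G) (h0 : g 0 = 1)
    (hq : ∀ t ∈ qs, g t.1 * g t.2.1 = g t.2.2.1 * g t.2.2.2)
    (hw : g w * g w = 1) (hw1 : g w ≠ 1) :
    Nonempty (UNC_QSol K qs w (G → ZMod c)) := by
  let ρ : G → (G → ZMod c) → (G → ZMod c) := fun g x h => x (g⁻¹ * h)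
  have ρmul : ∀ a b x, ρ (a * b) x = ρ a (ρ b x) := by
    intro a b x; funext h; simp [ρ, mul_assoc]
  have ρsub : ∀ a x y, ρ a (x - y) = ρ a x - ρ a y := by
    intro a x y; rfl
  have ρone : ∀ x, ρ 1 x = x := by intro x; simp [ρ]
  have ρinj : ∀ a x y, ρ a x = ρ a y → x = y := by
    intro a x y hxy
    have := congrArg (ρ a⁻¹) hxy
    rwa [← ρmul, ← ρmul, inv_mul_cancel, ρone, ρone] at this
  let ord : G → Fin (Fintype.card G) := Fintype.equivFin G
  have ordinj : Function.Injective ord := (Fintype.equivFin G).injective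
  set u := g w with hu
  have hne : ∀ h, u * h ≠ h := fun h hh => hw1 (mul_eq_right.1 hh)
  have huu : ∀ h, u * (u * h) = h := fun h => by rw [← mul_assoc, hw, one_mul]
  have hinv : u⁻¹ = u := inv_eq_of_mul_eq_one_left hw
  have ordcase : ∀ h, ¬ ord h < ord (u * h) → ord (u * h) < ord (u * (u * h)) := by
    intro h hh
    rw [huu]
    rcases lt_trichotomy (ord h) (ord (u * h)) with h1 | h1 | h1
    · exact absurd h1 hh
    · exact absurd (ordinj h1).symm (hne h)
    · exact h1
  let E : ℕ → (G → ZMod c) → (G → ZMod c) → (G → ZMod c) → (G → ZMod c) := fun j x1 x3 x4 =>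
    ρ (g (qs.getD j (0, 0, 0, 0)).1 * g (qs.getD j (0, 0, 0, 0)).2.1) x1 - x3 + x4
  have hinvar : ∀ x1 x2 y1 y2 : G → ZMod c, ρ (g 0) x1 - x2 = ρ (g 0) y1 - y2 →
      ρ u x1 - x2 = ρ u y1 - y2 → ∀ h, (x1 - y1) h = (x1 - y1) (u * h) := by
    intro x1 x2 y1 y2 e1 e2 h
    rw [h0, ρone, ρone] at e1
    have e1' := congrFun e1 h
    have e2' := congrFun e2 h
    simp only [ρ, Pi.sub_apply, hinv] at e1' e2' ⊢
    linear_combination e1' - e2'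
  have hinvar2 : ∀ x2 x3 y2 y3 : G → ZMod c, ρ (g 0) x2 - x3 = ρ (g 0) y2 - y3 →
      ρ u x2 - x3 = ρ u y2 - y3 → ∀ h, (x3 - y3) h = (x3 - y3) (u * h) := by
    intro x1 x2 y1 y2 e1 e2 h
    have i1 := hinvar _ _ _ _ e1 e2
    rw [h0, ρone, ρone] at e1
    have e3 : x2 - y2 = x1 - y1 := by
      have := e1
      linear_combination (exp := 1) -this
    rw [e3]; exact i1 h
  have e6 : ∀ a b (x1 x2 x3 x4 y1 y2 y3 y4 : G → ZMod c), ρ b x1 - x2 = ρ b y1 - y2 →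
      ρ a x2 - x3 = ρ a y2 - y3 → ρ (a * b) x1 - x3 + x4 = ρ (a * b) y1 - y3 + y4 → x4 = y4 := by
    intro a b x1 x2 x3 x4 y1 y2 y3 y4 e1 e2 e3
    have e1' := congrArg (ρ a) e1
    rw [ρsub, ρsub, ← ρmul, ← ρmul] at e1'
    linear_combination e3 - e2 - e1'
  refine ⟨⟨fun a x y => ρ (g a) x - y, fun a x y => ρ (g a) x - y, E,
    fun x1 x3 h => if ord h < ord (u * h) then x1 h else x3 (u * h),
    ?_, ?_, ?_, ?_, ?_, ?_, ?_, ?_, ?_⟩⟩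
  · intro a _ x y y' hh; simpa using hh
  · intro a _ x y y' hh; exact ρinj _ _ _ (by simpa using hh)
  · intro a _ x y y' hh; simpa using hh
  · intro a _ x y y' hh; exact ρinj _ _ _ (by simpa using hh)
  · intro j _ x y y' z hh; simpa [E] using hh
  · intro j hj x1 x2 x3 x4 y1 y2 y3 y4 e1 e2 e3
    exact e6 _ _ _ _ _ _ _ _ _ _ e1 e2 e3
  · intro j hj x1 x2 x3 x4 y1 y2 y3 y4 e1 e2 e3
    have hm : qs.getD j (0, 0, 0, 0) ∈ qs := by
      rw [List.getD_eq_getElem _ _ hj]; exact List.getElem_mem hj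
    simp only [E] at e3
    rw [hq _ hm] at e3
    exact e6 _ _ _ _ _ _ _ _ _ _ e1 e2 e3
  · intro x1 x2 x3 y1 y2 y3 e1 e2 e3
    have hi := hinvar _ _ _ _ e1 e2
    have hT : ∀ h, ord h < ord (u * h) → (x1 - y1) h = 0 := by
      intro h hh
      have := congrFun e3 h
      simp only [if_pos hh] at this
      simp [this]
    have : x1 - y1 = 0 := by
      funext h
      by_cases hh : ord h < ord (u * h)
      · exact hT h hh
      · rw [hi h]; exact hT _ (ordcase h hh)
    exact sub_eq_zero.1 this
  · intro x1 x2 x3 y1 y2 y3 e1 e2 e3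
    have hi := hinvar2 _ _ _ _ e1 e2
    have hT : ∀ h, ¬ ord h < ord (u * h) → (x3 - y3) (u * h) = 0 := by
      intro h hh
      have := congrFun e3 h
      simp only [if_neg hh] at this
      simp [this]
    have : x3 - y3 = 0 := by
      funext k
      by_cases hh : ord k < ord (u * k)
      · have h2 : ¬ ord (u * k) < ord (u * (u * k)) := by rw [huu]; exact not_lt.2 hh.le
        have := hT _ h2
        rwa [huu] at this
      · rw [hi k]; exact hT _ hh
    exact sub_eq_zero.1 this

theorem UNC_q_net_sound {K : ℕ} {qs : List UNC_Quad} {w : ℕ} (h : UNC_qWf K qs w)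
    (ht : ∀ g < K, (g, 0, 0, g) ∈ qs) {q : ℕ} (hq : 2 ≤ q)
    (hs : SolvableWith (UNC_toNet (UNC_qVs K qs) (UNC_qDs K qs w)) q) :
    ∃ g : ℕ → Equiv.Perm (Fin q), g 0 = 1 ∧
      (∀ t ∈ qs, g t.1 * g t.2.1 = g t.2.2.1 * g t.2.2.2) ∧ g w ≠ 1 := by
  have : Nontrivial (Fin q) := Fin.nontrivial_iff_two_le.2 hq
  obtain ⟨S⟩ := UNC_qsol_of_net h (by omega) (UNC_net_sound (UNC_q_wf h) (by omega) hs)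
  exact UNC_q_sound h ht S

theorem UNC_q_net_complete {K : ℕ} {qs : List UNC_Quad} {w : ℕ} (h : UNC_qWf K qs w) {c : ℕ}
    (hc : 2 ≤ c) {G : Type} [Group G] [Finite G] (g : ℕ → G) (h0 : g 0 = 1)
    (hq : ∀ t ∈ qs, g t.1 * g t.2.1 = g t.2.2.1 * g t.2.2.2)
    (hw : g w * g w = 1) (hw1 : g w ≠ 1) :
    ∃ m, 1 ≤ m ∧ SolvableWith (UNC_toNet (UNC_qVs K qs) (UNC_qDs K qs w)) (c ^ m) := by
  have : Fintype G := Fintype.ofFinite G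
  have : NeZero c := ⟨by omega⟩
  obtain ⟨S⟩ := UNC_q_complete (K := K) (c := c) g h0 hq hw hw1
  refine ⟨Fintype.card G, Fintype.card_pos, ?_⟩
  refine UNC_net_complete (UNC_q_wf h) (by positivity) (UNC_net_of_qsol h ?_ S)
  refine Fintype.equivFinOfCardEq ?_
  simp [ZMod.card]

end

section

/-! ### Part C: group equations `x y = z u v` -/

abbrev UNC_Five := ℕ × ℕ × ℕ × ℕ × ℕ

def UNC_fQuads (K : ℕ) (fs : List UNC_Five) : List UNC_Quad :=
  ((List.range fs.length).flatMap fun r =>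
    [((fs.getD r (0, 0, 0, 0, 0)).1, (fs.getD r (0, 0, 0, 0, 0)).2.1,
        (fs.getD r (0, 0, 0, 0, 0)).2.2.1, K + r),
     (K + r, 0, (fs.getD r (0, 0, 0, 0, 0)).2.2.2.1, (fs.getD r (0, 0, 0, 0, 0)).2.2.2.2)]) ++
  (List.range (K + fs.length)).map fun g => (g, 0, 0, g)

def UNC_fNet (K : ℕ) (fs : List UNC_Five) (w : ℕ) : Network :=
  UNC_toNet (UNC_qVs (K + fs.length) (UNC_fQuads K fs))
    (UNC_qDs (K + fs.length) (UNC_fQuads K fs) w)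

def UNC_fWf (K : ℕ) (fs : List UNC_Five) (w : ℕ) : Prop :=
  w < K ∧ ∀ t ∈ fs, t.1 < K ∧ t.2.1 < K ∧ t.2.2.1 < K ∧ t.2.2.2.1 < K ∧ t.2.2.2.2 < K

theorem UNC_fq_wf {K : ℕ} {fs : List UNC_Five} {w : ℕ} (h : UNC_fWf K fs w) :
    UNC_qWf (K + fs.length) (UNC_fQuads K fs) w := by
  have hw := h.1
  refine ⟨by omega, ?_⟩
  intro t ht
  unfold UNC_fQuads at ht
  simp only [List.mem_append, List.mem_flatMap, List.mem_range, List.mem_map, List.mem_cons,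
    List.not_mem_nil, or_false] at ht
  rcases ht with ⟨r, hr, ht⟩ | ⟨g, hg, rfl⟩
  · have hm : fs.getD r (0, 0, 0, 0, 0) ∈ fs := by
      rw [List.getD_eq_getElem _ _ hr]; exact List.getElem_mem hr
    have := h.2 _ hm
    revert ht this
    generalize fs.getD r (0, 0, 0, 0, 0) = s
    intro ht this
    rcases ht with rfl | rfl <;> simp <;> omega
  · simp; omega

theorem UNC_f_valid {K : ℕ} {fs : List UNC_Five} {w : ℕ} (h : UNC_fWf K fs w) :
    NetworkValid (UNC_fNet K fs w) :=
  UNC_valid (UNC_q_wf (UNC_fq_wf h))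

theorem UNC_f_sound {K : ℕ} {fs : List UNC_Five} {w : ℕ} (h : UNC_fWf K fs w) {q : ℕ}
    (hq : 2 ≤ q) (hs : SolvableWith (UNC_fNet K fs w) q) :
    ∃ g : ℕ → Equiv.Perm (Fin q), g 0 = 1 ∧
      (∀ t ∈ fs, g t.1 * g t.2.1 = g t.2.2.1 * g t.2.2.2.1 * g t.2.2.2.2) ∧ g w ≠ 1 := by
  obtain ⟨g, h0, h1, h2⟩ := UNC_q_net_sound (UNC_fq_wf h) (by
    intro g hg
    unfold UNC_fQuads
    refine List.mem_append_right _ (List.mem_map.2 ⟨g, List.mem_range.2 hg, rfl⟩)) hq hs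
  refine ⟨g, h0, ?_, h2⟩
  intro t ht
  obtain ⟨r, hr, rfl⟩ := List.getElem_of_mem ht
  have hd : fs.getD r (0, 0, 0, 0, 0) = fs[r] := List.getD_eq_getElem _ _ hr
  have a := h1 ((fs.getD r (0, 0, 0, 0, 0)).1, (fs.getD r (0, 0, 0, 0, 0)).2.1,
        (fs.getD r (0, 0, 0, 0, 0)).2.2.1, K + r) (by
    unfold UNC_fQuads
    exact List.mem_append_left _ (List.mem_flatMap.2 ⟨r, List.mem_range.2 hr, by simp⟩))
  have b := h1 (K + r, 0, (fs.getD r (0, 0, 0, 0, 0)).2.2.2.1,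
      (fs.getD r (0, 0, 0, 0, 0)).2.2.2.2) (by
    unfold UNC_fQuads
    exact List.mem_append_left _ (List.mem_flatMap.2 ⟨r, List.mem_range.2 hr, by simp⟩))
  rw [hd] at a b
  simp only [h0, mul_one] at a b
  rw [a, b, mul_assoc]

theorem UNC_f_complete {K : ℕ} {fs : List UNC_Five} {w : ℕ} (h : UNC_fWf K fs w) {c : ℕ}
    (hc : 2 ≤ c) {G : Type} [Group G] [Finite G] (g : ℕ → G) (h0 : g 0 = 1)
    (hq : ∀ t ∈ fs, g t.1 * g t.2.1 = g t.2.2.1 * g t.2.2.2.1 * g t.2.2.2.2)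
    (hw : g w * g w = 1) (hw1 : g w ≠ 1) :
    ∃ m, 1 ≤ m ∧ SolvableWith (UNC_fNet K fs w) (c ^ m) := by
  have hwK := h.1
  let g' : ℕ → G := fun i => if i < K then g i else
    g (fs.getD (i - K) (0, 0, 0, 0, 0)).2.2.2.1 * g (fs.getD (i - K) (0, 0, 0, 0, 0)).2.2.2.2
  have e1 : ∀ i < K, g' i = g i := fun i hi => if_pos hi
  have e2 : ∀ r, g' (K + r) = g (fs.getD r (0, 0, 0, 0, 0)).2.2.2.1 *
      g (fs.getD r (0, 0, 0, 0, 0)).2.2.2.2 := by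
    intro r
    simp only [g']
    rw [if_neg (by omega), Nat.add_sub_cancel_left]
  have e0 : g' 0 = 1 := by rw [e1 0 (by omega), h0]
  refine UNC_q_net_complete (UNC_fq_wf h) hc g' e0 ?_ (by rw [e1 w hwK, hw]) (by rwa [e1 w hwK])
  intro t ht
  unfold UNC_fQuads at ht
  simp only [List.mem_append, List.mem_flatMap, List.mem_range, List.mem_map, List.mem_cons,
    List.not_mem_nil, or_false] at ht
  rcases ht with ⟨r, hr, ht⟩ | ⟨g, hg, rfl⟩
  · have hm : fs.getD r (0, 0, 0, 0, 0) ∈ fs := by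
      rw [List.getD_eq_getElem _ _ hr]; exact List.getElem_mem hr
    have hwf := h.2 _ hm
    have hqq := hq _ hm
    rcases ht with rfl | rfl
    · simp only [e2]
      rw [e1 _ hwf.1, e1 _ hwf.2.1, e1 _ hwf.2.2.1, hqq, mul_assoc]
    · simp only [e2]
      rw [e1 _ hwf.2.2.2.1, e1 _ hwf.2.2.2.2, e0, mul_one]
  · simp [e0]

end

section

open scoped commutatorElement

/-! ### Part D: monoid actions with zero inside Steinberg-type groups -/

abbrev UNC_Tri := ℕ × ℕ × ℕ

def UNC_nm (a i j : ℕ) : ℕ := 1 + 25 * a + 5 * i + j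

def UNC_ijk : List (ℕ × ℕ × ℕ) :=
  (List.range 5).flatMap fun i => (List.range 5).flatMap fun j => (List.range 5).flatMap fun k =>
    if i ≠ j ∧ j ≠ k ∧ i ≠ k then [(i, j, k)] else []

def UNC_ijkl : List (ℕ × ℕ × ℕ × ℕ) :=
  (List.range 5).flatMap fun i => (List.range 5).flatMap fun j => (List.range 5).flatMap fun k =>
    (List.range 5).flatMap fun l =>
    if i ≠ j ∧ k ≠ l ∧ j ≠ k ∧ l ≠ i then [(i, j, k, l)] else []

def UNC_ij : List (ℕ × ℕ) :=
  (List.range 5).flatMap fun i => (List.range 5).flatMap fun j =>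
    if i ≠ j then [(i, j)] else []

theorem UNC_mem_ijk {x : ℕ × ℕ × ℕ} : x ∈ UNC_ijk ↔ x.1 < 5 ∧ x.2.1 < 5 ∧ x.2.2 < 5 ∧
    x.1 ≠ x.2.1 ∧ x.2.1 ≠ x.2.2 ∧ x.1 ≠ x.2.2 := by
  obtain ⟨i, j, k⟩ := x
  simp only [UNC_ijk, List.mem_flatMap, List.mem_range]
  constructor
  · rintro ⟨i', hi, j', hj, k', hk, h⟩
    split_ifs at h with hh
    · simp only [List.mem_singleton, Prod.mk.injEq] at h
      obtain ⟨rfl, rfl, rfl⟩ := h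
      exact ⟨hi, hj, hk, hh.1, hh.2.1, hh.2.2⟩
    · simp at h
  · rintro ⟨hi, hj, hk, hh⟩
    refine ⟨i, hi, j, hj, k, hk, ?_⟩
    rw [if_pos hh]; simp

theorem UNC_mem_ijkl {x : ℕ × ℕ × ℕ × ℕ} : x ∈ UNC_ijkl ↔ x.1 < 5 ∧ x.2.1 < 5 ∧ x.2.2.1 < 5 ∧
    x.2.2.2 < 5 ∧ x.1 ≠ x.2.1 ∧ x.2.2.1 ≠ x.2.2.2 ∧ x.2.1 ≠ x.2.2.1 ∧ x.2.2.2 ≠ x.1 := by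
  obtain ⟨i, j, k, l⟩ := x
  simp only [UNC_ijkl, List.mem_flatMap, List.mem_range]
  constructor
  · rintro ⟨i', hi, j', hj, k', hk, l', hl, h⟩
    split_ifs at h with hh
    · simp only [List.mem_singleton, Prod.mk.injEq] at h
      obtain ⟨rfl, rfl, rfl, rfl⟩ := h
      exact ⟨hi, hj, hk, hl, hh⟩
    · simp at h
  · rintro ⟨hi, hj, hk, hl, hh⟩
    refine ⟨i, hi, j, hj, k, hk, l, hl, ?_⟩
    rw [if_pos hh]; simp

theorem UNC_mem_ij {x : ℕ × ℕ} : x ∈ UNC_ij ↔ x.1 < 5 ∧ x.2 < 5 ∧ x.1 ≠ x.2 := by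
  obtain ⟨i, j⟩ := x
  simp only [UNC_ij, List.mem_flatMap, List.mem_range]
  constructor
  · rintro ⟨i', hi, j', hj, h⟩
    split_ifs at h with hh
    · simp only [List.mem_singleton, Prod.mk.injEq] at h
      obtain ⟨rfl, rfl⟩ := h
      exact ⟨hi, hj, hh⟩
    · simp at h
  · rintro ⟨hi, hj, hh⟩
    refine ⟨i, hi, j, hj, ?_⟩
    rw [if_pos hh]; simp

def UNC_gFives (K : ℕ) (T : List UNC_Tri) (z : ℕ) : List UNC_Five :=
  (T.flatMap fun t => UNC_ijk.map fun x =>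
    (UNC_nm t.1 x.1 x.2.1, UNC_nm t.2.1 x.2.1 x.2.2, UNC_nm t.2.2 x.1 x.2.2,
      UNC_nm t.2.1 x.2.1 x.2.2, UNC_nm t.1 x.1 x.2.1)) ++
  (((List.range K).flatMap fun a => (List.range K).flatMap fun b => UNC_ijkl.map fun x =>
    (UNC_nm a x.1 x.2.1, UNC_nm b x.2.2.1 x.2.2.2, 0, UNC_nm b x.2.2.1 x.2.2.2,
      UNC_nm a x.1 x.2.1)) ++
  UNC_ij.map fun x => (UNC_nm z x.1 x.2, 0, 0, 0, 0))

def UNC_gNet (K : ℕ) (T : List UNC_Tri) (z p : ℕ) : Network :=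
  UNC_fNet (1 + 25 * K) (UNC_gFives K T z) (UNC_nm p 0 4)

def UNC_gWf (K : ℕ) (T : List UNC_Tri) (z p : ℕ) : Prop :=
  z < K ∧ p < K ∧ ∀ t ∈ T, t.1 < K ∧ t.2.1 < K ∧ t.2.2 < K

theorem UNC_nm_lt {K a i j : ℕ} (ha : a < K) (hi : i < 5) (hj : j < 5) :
    UNC_nm a i j < 1 + 25 * K := by
  unfold UNC_nm; omega

theorem UNC_gf_wf {K : ℕ} {T : List UNC_Tri} {z p : ℕ} (h : UNC_gWf K T z p) :
    UNC_fWf (1 + 25 * K) (UNC_gFives K T z) (UNC_nm p 0 4) := by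
  obtain ⟨hz, hp, hT⟩ := h
  refine ⟨UNC_nm_lt hp (by omega) (by omega), ?_⟩
  intro f hf
  unfold UNC_gFives at hf
  simp only [List.mem_append, List.mem_flatMap, List.mem_map, List.mem_range] at hf
  rcases hf with ⟨t, ht, x, hx, rfl⟩ | ⟨a, ha, b, hb, x, hx, rfl⟩ | ⟨x, hx, rfl⟩
  · rw [UNC_mem_ijk] at hx
    obtain ⟨h1, h2, h3, _⟩ := hx
    obtain ⟨k1, k2, k3⟩ := hT t ht
    exact ⟨UNC_nm_lt k1 h1 h2, UNC_nm_lt k2 h2 h3, UNC_nm_lt k3 h1 h3, UNC_nm_lt k2 h2 h3,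
      UNC_nm_lt k1 h1 h2⟩
  · rw [UNC_mem_ijkl] at hx
    obtain ⟨h1, h2, h3, h4, _⟩ := hx
    refine ⟨UNC_nm_lt ha h1 h2, UNC_nm_lt hb h3 h4, by simp only; omega, UNC_nm_lt hb h3 h4,
      UNC_nm_lt ha h1 h2⟩
  · rw [UNC_mem_ij] at hx
    refine ⟨UNC_nm_lt hz hx.1 hx.2.1, ?_, ?_, ?_, ?_⟩ <;> simp only <;> omega

theorem UNC_g_valid {K : ℕ} {T : List UNC_Tri} {z p : ℕ} (h : UNC_gWf K T z p) :
    NetworkValid (UNC_gNet K T z p) := UNC_f_valid (UNC_gf_wf h)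

structure UNC_StRel {𝒢 : Type} [Group 𝒢] (K : ℕ) (T : List UNC_Tri) (z : ℕ)
    (E : ℕ → Fin 5 → Fin 5 → 𝒢) : Prop where
  tri : ∀ t ∈ T, ∀ i j k, i ≠ j → j ≠ k → i ≠ k →
    E t.1 i j * E t.2.1 j k = E t.2.2 i k * E t.2.1 j k * E t.1 i j
  com : ∀ a < K, ∀ b < K, ∀ i j k l, i ≠ j → k ≠ l → j ≠ k → l ≠ i →
    E a i j * E b k l = E b k l * E a i j
  zero : ∀ i j, i ≠ j → E z i j = 1

/-- An action of named operators on a pointed set. -/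
def UNC_MAct (K : ℕ) (T : List UNC_Tri) (z o p : ℕ) : Prop :=
  ∃ (V : Type) (zero : V) (act : ℕ → V → V) (v1 : V),
    (∀ t ∈ T, ∀ v, act t.1 (act t.2.1 v) = act t.2.2 v) ∧ (∀ v, act o v = v) ∧
    (∀ v, act z v = zero) ∧ (∀ a < K, act a zero = zero) ∧ act p v1 ≠ zero

theorem UNC_comm_key {𝒢 : Type} [Group 𝒢] {x y z c d : 𝒢} (hxz : Commute x z)
    (hc : ⁅x, y⁆ = c) (hd : ⁅y, z⁆ = d) (hcd : Commute c d) (hzd : Commute z d) :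
    ⁅x, d⁆ = ⁅c, z⁆ := by
  have hxy : x * y = c * y * x := by rw [← hc, commutatorElement_def]; group
  have hyz : y * z = d * z * y := by rw [← hd, commutatorElement_def]; group
  set e := ⁅c, z⁆ with he
  have hcz : c * z = e * z * c := by rw [he, commutatorElement_def]; group
  have hde : Commute d e := by
    rw [he, commutatorElement_def]
    exact ((hcd.symm.mul_right hzd.symm).mul_right hcd.symm.inv_right).mul_right hzd.symm.inv_right
  have h1 : x * d * (z * y) = d * e * x * (z * y) := by
    calc x * d * (z * y) = x * (d * z * y) := by group
      _ = x * y * z := by rw [← hyz]; group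
      _ = c * y * (x * z) := by rw [hxy]; group
      _ = c * (y * z) * x := by rw [hxz.eq]; group
      _ = c * d * z * y * x := by rw [hyz]; group
      _ = d * (c * z) * y * x := by rw [hcd.eq]; group
      _ = d * e * z * (c * y * x) := by rw [hcz]; group
      _ = d * e * (z * x) * y := by rw [← hxy]; group
      _ = d * e * x * (z * y) := by rw [← hxz.eq]; group
  have h2 := mul_right_cancel h1
  rw [commutatorElement_def, h2, hde.eq]
  group

section
variable {𝒢 : Type} [Group 𝒢] (E : ℕ → Fin 5 → Fin 5 → 𝒢) (K o : ℕ)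

structure UNC_IsVec (τ : Fin 4 → 𝒢) : Prop where
  f1 : ∀ a < K, ∀ i j k : Fin 4, i ≠ j → k ≠ j → Commute (E a i.castSucc j.castSucc) (τ k)
  f2 : ∀ i j, Commute (τ i) (τ j)
  f4 : ∀ i j : Fin 4, i ≠ j → ⁅E o i.castSucc j.castSucc, τ j⁆ = τ i

def UNC_act0 (a : ℕ) (τ : Fin 4 → 𝒢) : Fin 4 → 𝒢 := fun i =>
  ⁅E a i.castSucc (i + 1).castSucc, τ (i + 1)⁆

end

theorem UNC_fin4_a (i j k : Fin 4) : ∃ l, l ≠ i ∧ l ≠ j ∧ l ≠ k := by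
  revert i j k; decide

theorem UNC_fin4_b (i k : Fin 4) : ∃ l m, l ≠ i ∧ l ≠ k ∧ m ≠ i ∧ m ≠ k ∧ l ≠ m := by
  revert i k; decide

theorem UNC_comm_comm {𝒢 : Type} [Group 𝒢] {u x y : 𝒢} (h1 : Commute u x) (h2 : Commute u y) :
    Commute u ⁅x, y⁆ := by
  rw [commutatorElement_def]
  exact ((h1.mul_right h2).mul_right h1.inv_right).mul_right h2.inv_right

section
variable {𝒢 : Type} [Group 𝒢] {E : ℕ → Fin 5 → Fin 5 → 𝒢} {K o z : ℕ} {T : List UNC_Tri}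

theorem UNC_st_comm (hS : UNC_StRel K T z E) {t : UNC_Tri} (ht : t ∈ T) {i j k : Fin 5}
    (h1 : i ≠ j) (h2 : j ≠ k) (h3 : i ≠ k) : ⁅E t.1 i j, E t.2.1 j k⁆ = E t.2.2 i k := by
  rw [commutatorElement_def, hS.tri t ht i j k h1 h2 h3]; group

theorem UNC_cs {i j : Fin 4} (h : i ≠ j) : i.castSucc ≠ j.castSucc :=
  fun hh => h (Fin.castSucc_injective _ hh)

theorem UNC_act0_eq (hS : UNC_StRel K T z E) (ho : o < K)
    (hu2 : ∀ a < K, (a, o, a) ∈ T) {τ : Fin 4 → 𝒢} (hτ : UNC_IsVec E K o τ) {a : ℕ} (ha : a < K)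
    {i j : Fin 4} (hij : i ≠ j) : ⁅E a i.castSucc j.castSucc, τ j⁆ = UNC_act0 E a τ i := by
  have hi : i ≠ i + 1 := by clear hij; revert i; decide
  unfold UNC_act0
  by_cases hj : j = i + 1
  · rw [hj]
  · have hc := UNC_st_comm hS (hu2 a ha) (UNC_cs hij) (UNC_cs hj) (UNC_cs hi)
    exact UNC_comm_key (hτ.f1 a ha i j _ hij (Ne.symm hj)) hc (hτ.f4 j (i + 1) hj)
      (hτ.f1 a ha i _ j hi hj) (hτ.f2 _ _)

theorem UNC_act0_f3 (hS : UNC_StRel K T z E) (ho : o < K)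
    (hu2 : ∀ a < K, (a, o, a) ∈ T) {τ : Fin 4 → 𝒢} (hτ : UNC_IsVec E K o τ) {a : ℕ} (ha : a < K)
    (l j : Fin 4) : Commute (τ l) (UNC_act0 E a τ j) := by
  obtain ⟨m, h1, h2, _⟩ := UNC_fin4_a l j j
  rw [← UNC_act0_eq hS ho hu2 hτ ha (Ne.symm h2)]
  exact UNC_comm_comm (hτ.f1 a ha j m l (Ne.symm h2) (Ne.symm h1)).symm (hτ.f2 _ _)

theorem UNC_act0_f1 (hS : UNC_StRel K T z E) (ho : o < K)
    (hu2 : ∀ a < K, (a, o, a) ∈ T) {τ : Fin 4 → 𝒢} (hτ : UNC_IsVec E K o τ) {a : ℕ} (ha : a < K) :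
    ∀ b < K, ∀ i j k : Fin 4, i ≠ j → k ≠ j →
      Commute (E b i.castSucc j.castSucc) (UNC_act0 E a τ k) := by
  intro b hb i j k hij hkj
  obtain ⟨l, h1, h2, h3⟩ := UNC_fin4_a i j k
  rw [← UNC_act0_eq hS ho hu2 hτ ha (Ne.symm h3)]
  exact UNC_comm_comm (hS.com b hb a ha _ _ _ _ (UNC_cs hij) (UNC_cs h3.symm) (UNC_cs hkj.symm)
    (UNC_cs h1)) (hτ.f1 b hb i j l hij h2)

theorem UNC_act0_mul (hS : UNC_StRel K T z E) (ho : o < K)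
    (hT : ∀ t ∈ T, t.1 < K ∧ t.2.1 < K ∧ t.2.2 < K)
    (hu2 : ∀ a < K, (a, o, a) ∈ T) {τ : Fin 4 → 𝒢} (hτ : UNC_IsVec E K o τ) {t : UNC_Tri}
    (ht : t ∈ T) {i j : Fin 4} (hij : i ≠ j) :
    ⁅E t.1 i.castSucc j.castSucc, UNC_act0 E t.2.1 τ j⁆ = UNC_act0 E t.2.2 τ i := by
  obtain ⟨l, h1, h2, _⟩ := UNC_fin4_a i j j
  obtain ⟨t1, t2, t3⟩ := hT t ht
  rw [← UNC_act0_eq hS ho hu2 hτ t3 h1.symm]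
  exact UNC_comm_key (hτ.f1 _ t1 i j l hij h2)
    (UNC_st_comm hS ht (UNC_cs hij) (UNC_cs h2.symm) (UNC_cs h1.symm))
    (UNC_act0_eq hS ho hu2 hτ t2 h2.symm)
    (UNC_act0_f1 hS ho hu2 hτ t2 _ t3 i l j h1.symm h2.symm)
    (UNC_act0_f3 hS ho hu2 hτ t2 l j)

theorem UNC_act0_vec (hS : UNC_StRel K T z E) (ho : o < K)
    (hT : ∀ t ∈ T, t.1 < K ∧ t.2.1 < K ∧ t.2.2 < K)
    (hu1 : ∀ a < K, (o, a, a) ∈ T)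
    (hu2 : ∀ a < K, (a, o, a) ∈ T) {τ : Fin 4 → 𝒢} (hτ : UNC_IsVec E K o τ) {a : ℕ} (ha : a < K) :
    UNC_IsVec E K o (UNC_act0 E a τ) := by
  refine ⟨UNC_act0_f1 hS ho hu2 hτ ha, ?_, ?_⟩
  · intro i k
    by_cases hik : i = k
    · rw [hik]
    obtain ⟨j, l, h1, h2, h3, h4, h5⟩ := UNC_fin4_b i k
    rw [← UNC_act0_eq hS ho hu2 hτ ha h1.symm, ← UNC_act0_eq hS ho hu2 hτ ha h4.symm]
    have c1 : Commute (E a i.castSucc j.castSucc) (E a k.castSucc l.castSucc) :=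
      hS.com a ha a ha _ _ _ _ (UNC_cs h1.symm) (UNC_cs h4.symm) (UNC_cs h2) (UNC_cs h3)
    have c2 := hτ.f1 a ha i j l h1.symm h5.symm
    have c3 := hτ.f1 a ha k l j h4.symm h5
    exact (UNC_comm_comm (UNC_comm_comm c1 c2).symm (UNC_comm_comm c3.symm (hτ.f2 _ _)).symm).symm
  · intro i j hij
    exact UNC_act0_mul hS ho hT hu2 hτ (hu1 a ha) hij

theorem UNC_st_act (hS : UNC_StRel K T z E) {p : ℕ} (ho : o < K) (hz : z < K) (hp : p < K)
    (hT : ∀ t ∈ T, t.1 < K ∧ t.2.1 < K ∧ t.2.2 < K)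
    (hu1 : ∀ a < K, (o, a, a) ∈ T)
    (hu2 : ∀ a < K, (a, o, a) ∈ T) (hp1 : E p 0 4 ≠ 1) : UNC_MAct K T z o p := by
  have htriv : UNC_IsVec E K o (fun _ => 1) :=
    ⟨fun _ _ _ _ _ _ _ => Commute.one_right _, fun _ _ => Commute.one_right _,
      fun i j _ => by simp⟩
  have h4 : ∀ i : Fin 4, i.castSucc ≠ 4 := by decide
  have hv1 : UNC_IsVec E K o (fun i => E o i.castSucc 4) := by
    refine ⟨?_, ?_, ?_⟩
    · intro a ha i j k hij hkj
      exact hS.com a ha o ho _ _ _ _ (UNC_cs hij) (h4 k) (UNC_cs hkj.symm) (h4 i).symm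
    · intro i j
      exact hS.com o ho o ho _ _ _ _ (h4 i) (h4 j) (h4 j).symm (h4 i).symm
    · intro i j hij
      exact UNC_st_comm hS (hu1 o ho) (UNC_cs hij) (h4 j) (h4 i)
  refine ⟨{τ : Fin 4 → 𝒢 // UNC_IsVec E K o τ}, ⟨_, htriv⟩,
    fun a τ => if ha : a < K then ⟨UNC_act0 E a τ.1, UNC_act0_vec hS ho hT hu1 hu2 τ.2 ha⟩ else τ,
    ⟨_, hv1⟩, ?_, ?_, ?_, ?_, ?_⟩
  · intro t ht v
    obtain ⟨t1, t2, t3⟩ := hT t ht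
    simp only [dif_pos t1, dif_pos t2, dif_pos t3]
    apply Subtype.ext
    funext i
    exact UNC_act0_mul hS ho hT hu2 v.2 ht (by revert i; decide)
  · intro v
    simp only [dif_pos ho]
    apply Subtype.ext
    funext i
    exact v.2.f4 _ _ (by revert i; decide)
  · intro v
    simp only [dif_pos hz]
    apply Subtype.ext
    funext i
    have hi : i ≠ i + 1 := by revert i; decide
    simp [UNC_act0, hS.zero _ _ (UNC_cs hi)]
  · intro a ha
    simp only [dif_pos ha]
    apply Subtype.ext
    funext i
    simp [UNC_act0]
  · intro hh
    simp only [dif_pos hp] at hh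
    have := congrFun (congrArg Subtype.val hh) 0
    simp only [UNC_act0] at this
    rw [UNC_st_comm hS (hu2 p hp) (UNC_cs (by decide)) (h4 _) (h4 _)] at this
    exact hp1 this

end

theorem UNC_g_sound {K : ℕ} {T : List UNC_Tri} {z o p : ℕ} (h : UNC_gWf K T z p) (ho : o < K)
    (hu1 : ∀ a < K, (o, a, a) ∈ T) (hu2 : ∀ a < K, (a, o, a) ∈ T) {q : ℕ} (hq : 2 ≤ q)
    (hs : SolvableWith (UNC_gNet K T z p) q) : UNC_MAct K T z o p := by
  obtain ⟨g, h0, h1, h2⟩ := UNC_f_sound (UNC_gf_wf h) hq hs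
  refine UNC_st_act (E := fun a i j => g (UNC_nm a i j)) ?_ ho h.1 h.2.1 h.2.2 hu1 hu2 h2
  unfold UNC_gFives at h1
  simp only [List.mem_append, List.mem_flatMap, List.mem_map, List.mem_range] at h1
  refine ⟨?_, ?_, ?_⟩
  · intro t ht i j k hij hjk hik
    refine h1 _ (Or.inl ⟨t, ht, (i, j, k), ?_, rfl⟩)
    rw [UNC_mem_ijk]
    simp only [ne_eq, Fin.val_inj]
    exact ⟨i.2, j.2, k.2, hij, hjk, hik⟩
  · intro a ha b hb i j k l hij hkl hjk hli
    have := h1 _ (Or.inr (Or.inl ⟨a, ha, b, hb, (i, j, k, l), ?_, rfl⟩))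
    · simpa only [h0, one_mul] using this
    · rw [UNC_mem_ijkl]
      simp only [ne_eq, Fin.val_inj]
      exact ⟨i.2, j.2, k.2, l.2, hij, hkl, hjk, hli⟩
  · intro i j hij
    have := h1 _ (Or.inr (Or.inr ⟨(i, j), ?_, rfl⟩))
    · simpa only [h0, mul_one] using this
    · rw [UNC_mem_ij]
      simp only [ne_eq, Fin.val_inj]
      exact ⟨i.2, j.2, hij⟩

/-- transvection -/
def UNC_tv {A : Type} [AddCommGroup A] (h2 : ∀ x : A, x + x = 0) (φ : A → A) (i j : Fin 5) :
    Equiv.Perm (Fin 5 → A) :=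
  if hij : i = j then 1 else
  { toFun := fun x => Function.update x i (x i + φ (x j))
    invFun := fun x => Function.update x i (x i + φ (x j))
    left_inv := by
      intro x
      have hji : j ≠ i := fun h => hij h.symm
      simp [Function.update_of_ne hji, add_assoc, h2]
    right_inv := by
      intro x
      have hji : j ≠ i := fun h => hij h.symm
      simp [Function.update_of_ne hji, add_assoc, h2] }

theorem UNC_tv_apply {A : Type} [AddCommGroup A] (h2 : ∀ x : A, x + x = 0) (φ : A → A)
    {i j : Fin 5} (hij : i ≠ j) (x : Fin 5 → A) (r : Fin 5) :
    UNC_tv h2 φ i j x r = if r = i then x i + φ (x j) else x r := by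
  unfold UNC_tv
  rw [dif_neg hij]
  simp [Function.update_apply]

theorem UNC_g_complete {K : ℕ} {T : List UNC_Tri} {z p : ℕ} (h : UNC_gWf K T z p) {c : ℕ}
    (hc : 2 ≤ c) {S : Type} [Finite S] (g : ℕ → S → Option S)
    (hT : ∀ t ∈ T, ∀ s, (g t.1 s).bind (g t.2.1) = g t.2.2 s)
    (hz : ∀ s, g z s = none) (hp : ∃ s, g p s ≠ none) :
    ∃ m, 1 ≤ m ∧ SolvableWith (UNC_gNet K T z p) (c ^ m) := by
  let A := S → ZMod 2
  have h2 : ∀ x : A, x + x = 0 := by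
    intro x; funext s
    exact CharTwo.add_self_eq_zero (x s)
  let φ : ℕ → A → A := fun a x s => (g a s).elim 0 x
  have φadd : ∀ a x y, φ a (x + y) = φ a x + φ a y := by
    intro a x y; funext s
    change (g a s).elim 0 (x + y) = (g a s).elim 0 x + (g a s).elim 0 y
    cases g a s
    · simp
    · rfl
  have φmul : ∀ t ∈ T, ∀ x, φ t.1 (φ t.2.1 x) = φ t.2.2 x := by
    intro t ht x; funext s
    simp only [φ]
    rw [← hT t ht s]
    cases g t.1 s <;> simp
  have φz : ∀ x, φ z x = 0 := by
    intro x; funext s; simp only [φ, hz]; rfl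
  let F : ℕ → Equiv.Perm (Fin 5 → A) := fun n =>
    if n = 0 then 1 else UNC_tv h2 (φ ((n - 1) / 25)) (Fin.ofNat 5 ((n - 1) / 5)) (Fin.ofNat 5 (n - 1))
  have F0 : F 0 = 1 := if_pos rfl
  have Fnm : ∀ a, ∀ i j : Fin 5, F (UNC_nm a i j) = UNC_tv h2 (φ a) i j := by
    intro a i j
    simp only [F, UNC_nm]
    rw [if_neg (by omega)]
    have e1 : (1 + 25 * a + 5 * i.1 + j.1 - 1) / 25 = a := by omega
    have e2 : Fin.ofNat 5 ((1 + 25 * a + 5 * i.1 + j.1 - 1) / 5) = i := by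
      apply Fin.ext; simp only [Fin.val_ofNat]; omega
    have e3 : Fin.ofNat 5 (1 + 25 * a + 5 * i.1 + j.1 - 1) = j := by
      apply Fin.ext; simp only [Fin.val_ofNat]; omega
    rw [e1, e2, e3]
  have : Finite (Equiv.Perm (Fin 5 → A)) := inferInstance
  refine UNC_f_complete (UNC_gf_wf h) hc F F0 ?_ ?_ ?_
  · intro f hf
    unfold UNC_gFives at hf
    simp only [List.mem_append, List.mem_flatMap, List.mem_map, List.mem_range] at hf
    rcases hf with ⟨t, ht, ⟨i, j, k⟩, hx, rfl⟩ | ⟨a, ha, b, hb, ⟨i, j, k, l⟩, hx, rfl⟩ |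
      ⟨⟨i, j⟩, hx, rfl⟩
    · rw [UNC_mem_ijk] at hx
      obtain ⟨hi, hj, hk, hij, hjk, hik⟩ := hx
      lift i to Fin 5 using hi
      lift j to Fin 5 using hj
      lift k to Fin 5 using hk
      simp only [ne_eq, Fin.val_inj] at hij hjk hik
      simp only [Fnm]
      ext1 x
      funext r
      simp only [Equiv.Perm.mul_apply, UNC_tv_apply h2 _ hij, UNC_tv_apply h2 _ hjk,
        UNC_tv_apply h2 _ hik]
      have := φmul t ht (x k)
      by_cases hri : r = i
      · subst hri
        simp [hij, Ne.symm hij, hjk, Ne.symm hjk, hik, Ne.symm hik, φadd, this, add_assoc]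
      · by_cases hrj : r = j
        · subst hrj
          simp [hij, Ne.symm hij, hjk, Ne.symm hjk, hik, Ne.symm hik]
        · simp [hri, hrj]
    · rw [UNC_mem_ijkl] at hx
      obtain ⟨hi, hj, hk, hl, hij, hkl, hjk, hli⟩ := hx
      lift i to Fin 5 using hi
      lift j to Fin 5 using hj
      lift k to Fin 5 using hk
      lift l to Fin 5 using hl
      simp only [ne_eq, Fin.val_inj] at hij hkl hjk hli
      simp only [Fnm, F0, one_mul]
      ext1 x
      funext r
      simp only [Equiv.Perm.mul_apply, UNC_tv_apply h2 _ hij, UNC_tv_apply h2 _ hkl]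
      by_cases hik : i = k
      · subst hik
        by_cases hri : r = i
        · subst hri
          simp only [hjk, hli, if_true, if_false]
          abel
        · simp [hri]
      · by_cases hri : r = i
        · subst hri
          simp [hij, Ne.symm hij, hkl, Ne.symm hkl, hjk, hli, hik]
        · by_cases hrk : r = k
          · subst hrk
            simp [hij, Ne.symm hij, hkl, Ne.symm hkl, hjk, hli, Ne.symm hik]
          · simp [hri, hrk]
    · rw [UNC_mem_ij] at hx
      obtain ⟨hi, hj, hij⟩ := hx
      lift i to Fin 5 using hi
      lift j to Fin 5 using hj
      simp only [ne_eq, Fin.val_inj] at hij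
      simp only [Fnm, F0, mul_one]
      ext1 x
      funext r
      simp only [UNC_tv_apply h2 _ hij, φz]
      by_cases hri : r = i <;> simp [hri]
  · have := Fnm p 0 4
    simp only [Fin.val_zero, show ((4 : Fin 5) : ℕ) = 4 from rfl] at this
    rw [this]
    ext1 x
    funext r
    simp only [Equiv.Perm.mul_apply, UNC_tv_apply h2 _ (show (0 : Fin 5) ≠ 4 by decide)]
    by_cases hr : r = 0
    · subst hr
      simp [add_assoc, h2]
    · simp [hr]
  · have := Fnm p 0 4
    simp only [Fin.val_zero, show ((4 : Fin 5) : ℕ) = 4 from rfl] at this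
    rw [this]
    intro hh
    obtain ⟨s, hs⟩ := hp
    obtain ⟨t, ht⟩ := Option.ne_none_iff_exists'.1 hs
    have h3 := congrArg (fun π : Equiv.Perm (Fin 5 → A) => π (fun i => if i = 4 then 1 else 0) 0 s) hh
    simp only [UNC_tv_apply h2 _ (show (0 : Fin 5) ≠ 4 by decide)] at h3
    rw [if_pos trivial, if_pos trivial, if_neg (by decide)] at h3
    have h4 : (0 : A) s + φ p 1 s = (0 : A) s := h3
    have h5 : φ p 1 s = (1 : ZMod 2) := by simp only [φ, ht]; rfl
    rw [h5] at h4
    have h6 : (0 : A) s = (0 : ZMod 2) := rfl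
    rw [h6] at h4
    revert h4; decide

end

section

/-- Instructions of a generic stack machine. -/
inductive UNC_Ins (κ Γ Q : Type) : Type
  | push (k : κ) (γ : Γ) (q : Q)
  | pop (k : κ) (f : Option Γ → Q)
  | peek (k : κ) (f : Option Γ → Q)
  | jump (q : Q)
  | acc
  | rej

/-- One step of a generic stack machine. -/
def UNC_step {κ Γ Q : Type} (ins : Q → UNC_Ins κ Γ Q) (c : Q × (κ → List Γ)) :
    Option (Q × (κ → List Γ)) :=
  match ins c.1 with
  | .push k γ q' => some (q', Function.update c.2 k (γ :: c.2 k))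
  | .pop k f => some (f (c.2 k).head?, Function.update c.2 k (c.2 k).tail)
  | .peek k f => some (f (c.2 k).head?, c.2)
  | .jump q' => some (q', c.2)
  | .acc => none
  | .rej => none

/-- Reachability for the generic machine. -/
def UNC_Reach {κ Γ Q : Type} (ins : Q → UNC_Ins κ Γ Q) :
    Q × (κ → List Γ) → Q × (κ → List Γ) → Prop :=
  Relation.ReflTransGen (fun c c' => UNC_step ins c = some c')

/-- Letters of the presentation. -/
inductive UNC_Let (κ Γ Q : Type) : Type
  | E (q : Q)
  | X (k : κ) (γ : Γ)
  | Y (k : κ) (γ : Γ)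
  | Z (k : κ)
  | P

/-- Rewriting rules (equations) of the presentation. -/
inductive UNC_Rule {κ Γ Q : Type} (ins : Q → UNC_Ins κ Γ Q) (k0 : κ) (b : Γ) :
    List (UNC_Let κ Γ Q) → List (UNC_Let κ Γ Q) → Prop
  | XX (k k' γ γ') (h : k ≠ k') : UNC_Rule ins k0 b [.X k γ, .X k' γ'] [.X k' γ', .X k γ]
  | XY (k k' γ γ') (h : k ≠ k') : UNC_Rule ins k0 b [.X k γ, .Y k' γ'] [.Y k' γ', .X k γ]
  | YY (k k' γ γ') (h : k ≠ k') : UNC_Rule ins k0 b [.Y k γ, .Y k' γ'] [.Y k' γ', .Y k γ]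
  | ZX (k k' γ') (h : k ≠ k') : UNC_Rule ins k0 b [.Z k, .X k' γ'] [.X k' γ', .Z k]
  | push1 (q k γ q') (h : ins q = .push k γ q') :
      UNC_Rule ins k0 b [.E q', .X k γ, .E q] [.X k γ, .E q]
  | push2 (q k γ q') (h : ins q = .push k γ q') :
      UNC_Rule ins k0 b [.Y k γ, .X k γ, .E q] [.E q]
  | pop1 (q k f γ) (h : ins q = .pop k f) :
      UNC_Rule ins k0 b [.E (f (some γ)), .Y k γ, .E q] [.Y k γ, .E q]
  | pop2 (q k f) (h : ins q = .pop k f) :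
      UNC_Rule ins k0 b [.E (f none), .Z k, .E q] [.Z k, .E q]
  | peek1 (q k f γ) (h : ins q = .peek k f) :
      UNC_Rule ins k0 b [.E (f (some γ)), .X k γ, .Y k γ, .E q] [.X k γ, .Y k γ, .E q]
  | peek2 (q k f) (h : ins q = .peek k f) :
      UNC_Rule ins k0 b [.E (f none), .Z k, .E q] [.Z k, .E q]
  | jump (q q') (h : ins q = .jump q') : UNC_Rule ins k0 b [.E q', .E q] [.E q]
  | init1 (k) : UNC_Rule ins k0 b [.Z k, .P] [.P]
  | init2 : UNC_Rule ins k0 b [.Y k0 b, .X k0 b, .P] [.P]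

lemma UNC_Rule.len {κ Γ Q : Type} {ins : Q → UNC_Ins κ Γ Q} {k0 : κ} {b : Γ}
    {l r : List (UNC_Let κ Γ Q)} (h : UNC_Rule ins k0 b l r) : l.length ≤ 4 ∧ r.length ≤ 4 := by
  cases h <;> simp

/-- `UNC_Rep A u s`: the vector `u` encodes the stack contents `s`. -/
inductive UNC_Rep {κ Γ Q V : Type} (A : UNC_Let κ Γ Q → V → V) : V → (κ → List Γ) → Prop
  | mk (u : V) (s : κ → List Γ) (h1 : ∀ k, s k = [] → A (.Z k) u = u)
      (h2 : ∀ k γ r, s k = γ :: r → A (.X k γ) (A (.Y k γ) u) = u)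
      (h3 : ∀ k γ r, s k = γ :: r → UNC_Rep A (A (.Y k γ) u) (Function.update s k r)) :
      UNC_Rep A u s

section sound
variable {κ Γ Q V : Type} {ins : Q → UNC_Ins κ Γ Q} {k0 : κ} {b : Γ}
  {A : UNC_Let κ Γ Q → V → V}

lemma UNC_rep_push (hR : ∀ l r, UNC_Rule ins k0 b l r → ∀ v, l.foldr A v = r.foldr A v)
    {u : V} {s : κ → List Γ} (h : UNC_Rep A u s) (k : κ) (γ : Γ)
    (hyx : A (.Y k γ) (A (.X k γ) u) = u) :
    UNC_Rep A (A (.X k γ) u) (Function.update s k (γ :: s k)) := by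
  induction h with
  | mk u s h1 h2 h3 ih =>
    refine .mk _ _ ?_ ?_ ?_
    · intro k' hk'
      by_cases hkk : k' = k
      · subst hkk; simp at hk'
      · rw [Function.update_of_ne hkk] at hk'
        have := hR _ _ (.ZX k' k γ hkk) u
        simp only [List.foldr] at this
        rw [this, h1 k' hk']
    · intro k' δ r hk'
      by_cases hkk : k' = k
      · subst hkk
        simp only [Function.update_self, List.cons.injEq] at hk'
        obtain ⟨rfl, rfl⟩ := hk'
        rw [hyx]
      · rw [Function.update_of_ne hkk] at hk'
        have e1 := hR _ _ (.XY k k' γ δ (Ne.symm hkk)) u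
        have e2 := hR _ _ (.XX k' k δ γ hkk) (A (.Y k' δ) u)
        simp only [List.foldr] at e1 e2
        rw [← e1, e2, h2 k' δ r hk']
    · intro k' δ r hk'
      by_cases hkk : k' = k
      · subst hkk
        simp only [Function.update_self, List.cons.injEq] at hk'
        obtain ⟨rfl, rfl⟩ := hk'
        rw [hyx, Function.update_idem, Function.update_eq_self]
        exact .mk u s h1 h2 h3
      · rw [Function.update_of_ne hkk] at hk'
        have e1 := hR _ _ (.XY k k' γ δ (Ne.symm hkk)) u
        have e2 := hR _ _ (.YY k k' γ δ (Ne.symm hkk)) (A (.X k γ) u)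
        simp only [List.foldr] at e1 e2
        have := ih k' δ r hk' (by rw [e1, e2, hyx])
        rw [e1, Function.update_of_ne (Ne.symm hkk)] at this
        rwa [Function.update_comm (Ne.symm hkk)]

/-- invariant of runs -/
def UNC_Inv (A : UNC_Let κ Γ Q → V → V) (zero : V) (c : Q × (κ → List Γ)) : Prop :=
  ∃ u, UNC_Rep A u c.2 ∧ A (.E c.1) u = u ∧ u ≠ zero

lemma UNC_inv_step (hR : ∀ l r, UNC_Rule ins k0 b l r → ∀ v, l.foldr A v = r.foldr A v)
    {zero : V} (h0 : ∀ a, A a zero = zero)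
    {c c' : Q × (κ → List Γ)} (hs : UNC_step ins c = some c') (h : UNC_Inv A zero c) :
    UNC_Inv A zero c' := by
  obtain ⟨q, s⟩ := c
  obtain ⟨u, hu, hq, hne⟩ := h
  simp only at hq
  unfold UNC_step at hs
  simp only at hs
  split at hs
  · rename_i k γ q' hi
    cases hs
    have e1 := hR _ _ (.push1 q k γ q' hi) u
    have e2 := hR _ _ (.push2 q k γ q' hi) u
    simp only [List.foldr, hq] at e1 e2
    refine ⟨A (.X k γ) u, UNC_rep_push hR hu k γ e2, e1, fun h => hne ?_⟩
    rw [← e2, h, h0]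
  · rename_i k f hi
    cases hs
    cases hk : s k with
    | nil =>
      have e1 := hR _ _ (.pop2 q k f hi) u
      simp only [List.foldr, hq] at e1
      obtain ⟨_, _, h1, h2, h3⟩ := hu
      rw [h1 k hk] at e1
      refine ⟨u, ?_, by simpa [hk] using e1, hne⟩
      simp only [List.tail]
      rw [← hk, Function.update_eq_self]
      exact .mk u s h1 h2 h3
    | cons γ r =>
      have e1 := hR _ _ (.pop1 q k f γ hi) u
      simp only [List.foldr, hq] at e1
      obtain ⟨_, _, h1, h2, h3⟩ := hu
      refine ⟨_, h3 k γ r hk, by simpa [hk] using e1, fun h => hne ?_⟩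
      rw [← h2 k γ r hk, h, h0]
  · rename_i k f hi
    cases hs
    refine ⟨u, hu, ?_, hne⟩
    cases hk : s k with
    | nil =>
      have e1 := hR _ _ (.peek2 q k f hi) u
      simp only [List.foldr, hq] at e1
      obtain ⟨_, _, h1, h2, h3⟩ := hu
      rw [h1 k hk] at e1
      simpa [hk] using e1
    | cons γ r =>
      have e1 := hR _ _ (.peek1 q k f γ hi) u
      simp only [List.foldr, hq] at e1
      obtain ⟨_, _, h1, h2, h3⟩ := hu
      rw [h2 k γ r hk] at e1
      simpa [hk] using e1
  · rename_i q' hi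
    cases hs
    have e1 := hR _ _ (.jump q q' hi) u
    simp only [List.foldr, hq] at e1
    exact ⟨u, hu, e1, hne⟩
  · cases hs
  · cases hs

lemma UNC_inv_reach (hR : ∀ l r, UNC_Rule ins k0 b l r → ∀ v, l.foldr A v = r.foldr A v)
    {zero : V} (h0 : ∀ a, A a zero = zero)
    {c c' : Q × (κ → List Γ)} (hs : UNC_Reach ins c c') (h : UNC_Inv A zero c) :
    UNC_Inv A zero c' := by
  induction hs with
  | refl => exact h
  | tail _ h2 ih => exact UNC_inv_step hR h0 h2 ih

/-- The initial stack contents after `j` marks. -/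
def UNC_ini (k0 : κ) (a b : Γ) (j : ℕ) : κ → List Γ :=
  Function.update (fun _ => []) k0 (List.replicate j a ++ [b])

lemma UNC_ini_succ (k0 : κ) (a b : Γ) (j : ℕ) :
    UNC_ini k0 a b (j+1) = Function.update (UNC_ini k0 a b j) k0 (a :: UNC_ini k0 a b j k0) := by
  simp [UNC_ini, List.replicate_succ]

lemma UNC_rej_contra (hR : ∀ l r, UNC_Rule ins k0 b l r → ∀ v, l.foldr A v = r.foldr A v)
    {zero : V} (h0 : ∀ a, A a zero = zero) (hrej : ∀ q, ins q = .rej → ∀ v, A (.E q) v = zero)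
    (v1 : V) (hp : A .P v1 ≠ zero) (n : ℕ) (a : Γ) (lev : ℕ → V) (q0 : Q)
    (hq0 : A (.E q0) (lev 0) = lev 0)
    (hX : ∀ i < n, A (.X k0 a) (lev (i+1)) = lev i)
    (hY : ∀ i < n, A (.Y k0 a) (lev i) = lev (i+1))
    (hn : lev n = A (.X k0 b) (A .P v1))
    {c : Q × (κ → List Γ)} (hc : ins c.1 = .rej) :
    ¬ UNC_Reach ins (q0, UNC_ini k0 a b n) c := by
  intro hr
  have hw : UNC_Rep A (A .P v1) (fun _ => []) := by
    refine .mk _ _ ?_ ?_ ?_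
    · intro k _
      have := hR _ _ (.init1 k) v1
      simpa only [List.foldr] using this
    · intro k γ r h; cases h
    · intro k γ r h; cases h
  have hi2 := hR _ _ .init2 v1
  simp only [List.foldr] at hi2
  have key : ∀ j ≤ n, UNC_Rep A (lev (n - j)) (UNC_ini k0 a b j) ∧ lev (n - j) ≠ zero := by
    intro j
    induction j with
    | zero =>
      intro _
      rw [Nat.sub_zero, hn]
      refine ⟨?_, fun h => hp ?_⟩
      · exact UNC_rep_push hR hw k0 b hi2
      · rw [← hi2, h, h0]
    | succ j ih =>
      intro hj
      obtain ⟨i1, i2⟩ := ih (by omega)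
      have e : n - j = n - (j+1) + 1 := by omega
      rw [e] at i1 i2
      have hx := hX (n - (j+1)) (by omega)
      have hy := hY (n - (j+1)) (by omega)
      rw [UNC_ini_succ, ← hx]
      refine ⟨UNC_rep_push hR i1 k0 a (by rw [hx, hy]), fun h => i2 ?_⟩
      rw [← hy, ← hx, h, h0]
  obtain ⟨k1, k2⟩ := key n le_rfl
  rw [Nat.sub_self] at k1 k2
  obtain ⟨u, _, h2, h3⟩ := UNC_inv_reach hR h0 hr ⟨_, k1, hq0, k2⟩
  exact h3 (by rw [← h2]; exact hrej _ hc u)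

end sound

section complete
variable {κ Γ Q : Type} {ins : Q → UNC_Ins κ Γ Q}

/-- Partial action of letters. -/
def UNC_G (F : Set (Q × (κ → List Γ))) (L : ℕ) :
    UNC_Let κ Γ Q → (κ → List Γ) → Option (κ → List Γ)
  | .E q, s => if (q, s) ∈ F then some s else none
  | .X k γ, s => if (s k).head? = some γ then some (Function.update s k (s k).tail) else none
  | .Y k γ, s => if (s k).length < L then some (Function.update s k (γ :: s k)) else none
  | .Z k, s => if s k = [] then some s else none
  | .P, s => if s = (fun _ => []) then some s else none

/-- Partial action of words. -/
def UNC_W (F : Set (Q × (κ → List Γ))) (L : ℕ) :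
    List (UNC_Let κ Γ Q) → (κ → List Γ) → Option (κ → List Γ)
  | [], s => some s
  | a :: l, s => (UNC_G F L a s).bind (UNC_W F L l)

lemma UNC_W_append (F : Set (Q × (κ → List Γ))) (L : ℕ) (u v : List (UNC_Let κ Γ Q))
    (s : κ → List Γ) : UNC_W F L (u ++ v) s = (UNC_W F L u s).bind (UNC_W F L v) := by
  induction u generalizing s with
  | nil => rfl
  | cons a l ih =>
    simp only [List.cons_append, UNC_W]
    cases UNC_G F L a s with
    | none => rfl
    | some r => exact ih r

lemma UNC_head_tail {l : List Γ} {γ : Γ} (h : l.head? = some γ) : l = γ :: l.tail := by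
  cases l with
  | nil => simp at h
  | cons a t => simp at h; simp [h]

lemma UNC_W_rule {F : Set (Q × (κ → List Γ))} {L : ℕ} {k0 : κ} {b : Γ} (hL : 1 ≤ L)
    (hF : ∀ c ∈ F, (∀ k, (c.2 k).length < L) ∧ ∀ c', UNC_step ins c = some c' → c' ∈ F)
    {l r : List (UNC_Let κ Γ Q)} (h : UNC_Rule ins k0 b l r) (s : κ → List Γ) :
    UNC_W F L l s = UNC_W F L r s := by
  cases h with
  | XX k k' γ γ' h =>
    simp only [UNC_W, UNC_G]
    by_cases h1 : (s k).head? = some γ <;> by_cases h2 : (s k').head? = some γ' <;>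
      simp [h1, h2, Function.update_of_ne h, Function.update_of_ne (Ne.symm h),
        Function.update_comm h]
  | XY k k' γ γ' h =>
    simp only [UNC_W, UNC_G]
    by_cases h1 : (s k).head? = some γ <;> by_cases h2 : (s k').length < L <;>
      simp [h1, h2, Function.update_of_ne h, Function.update_of_ne (Ne.symm h),
        Function.update_comm h]
  | YY k k' γ γ' h =>
    simp only [UNC_W, UNC_G]
    by_cases h1 : (s k).length < L <;> by_cases h2 : (s k').length < L <;>
      simp [h1, h2, Function.update_of_ne h, Function.update_of_ne (Ne.symm h),
        Function.update_comm h]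
  | ZX k k' γ' h =>
    simp only [UNC_W, UNC_G]
    by_cases h1 : s k = [] <;> by_cases h2 : (s k').head? = some γ' <;>
      simp [h1, h2, Function.update_of_ne h]
  | push1 q k γ q' h =>
    simp only [UNC_W, UNC_G]
    by_cases h1 : (s k).head? = some γ
    · by_cases h2 : (q, Function.update s k (s k).tail) ∈ F
      · have h3 := (hF _ h2).2 (q', s) (by
          simp only [UNC_step, h, Function.update_self, Function.update_idem,
            ← UNC_head_tail h1, Function.update_eq_self])
        simp [h1, h2, h3]
      · by_cases h3 : (q', s) ∈ F <;> simp [h1, h2, h3]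
    · by_cases h3 : (q', s) ∈ F <;> simp [h1, h3]
  | push2 q k γ q' h =>
    simp only [UNC_W, UNC_G]
    by_cases h1 : (q, s) ∈ F
    · have := (hF _ h1).1 k
      simp only at this
      simp [h1, this]
    · by_cases h2 : (s k).length < L <;> simp [h1, h2]
  | pop1 q k f γ h =>
    simp only [UNC_W, UNC_G]
    by_cases h1 : (s k).length < L
    · by_cases h2 : (q, Function.update s k (γ :: s k)) ∈ F
      · have h3 := (hF _ h2).2 (f (some γ), s) (by simp [UNC_step, h])
        simp [h1, h2, h3]
      · by_cases h3 : (f (some γ), s) ∈ F <;> simp [h1, h2, h3]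
    · by_cases h3 : (f (some γ), s) ∈ F <;> simp [h1, h3]
  | pop2 q k f h =>
    simp only [UNC_W, UNC_G]
    by_cases h1 : s k = []
    · by_cases h2 : (q, s) ∈ F
      · have h3 := (hF _ h2).2 (f none, s) (by
          have : Function.update s k [] = s := by rw [← h1, Function.update_eq_self]
          simp [UNC_step, h, h1, this])
        simp [h1, h2, h3]
      · by_cases h3 : (f none, s) ∈ F <;> simp [h1, h2, h3]
    · by_cases h3 : (f none, s) ∈ F <;> simp [h1, h3]
  | peek1 q k f γ h =>
    simp only [UNC_W, UNC_G]
    by_cases h1 : (s k).head? = some γ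
    · by_cases h2 : (q, s) ∈ F
      · have h3 := (hF _ h2).2 (f (some γ), s) (by simp [UNC_step, h, h1])
        simp [h1, h3]
      · have h5 : Function.update (Function.update s k (s k).tail) k (γ :: (s k).tail) = s := by
          rw [Function.update_idem, ← UNC_head_tail h1, Function.update_eq_self]
        by_cases h4 : (s k).length - 1 < L <;>
        by_cases h3 : (f (some γ), s) ∈ F <;>
        simp [h1, h2, h3, h4, ← UNC_head_tail h1]
    · by_cases h3 : (f (some γ), s) ∈ F <;> simp [h1, h3]
  | peek2 q k f h =>
    simp only [UNC_W, UNC_G]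
    by_cases h1 : s k = []
    · by_cases h2 : (q, s) ∈ F
      · have h3 := (hF _ h2).2 (f none, s) (by simp [UNC_step, h, h1])
        simp [h1, h2, h3]
      · by_cases h3 : (f none, s) ∈ F <;> simp [h1, h2, h3]
    · by_cases h3 : (f none, s) ∈ F <;> simp [h1, h3]
  | jump q q' h =>
    simp only [UNC_W, UNC_G]
    by_cases h2 : (q, s) ∈ F
    · have h3 := (hF _ h2).2 (q', s) (by simp [UNC_step, h])
      simp [h2, h3]
    · by_cases h3 : (q', s) ∈ F <;> simp [h2, h3]
  | init1 k =>
    simp only [UNC_W, UNC_G]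
    by_cases h1 : s = fun _ => []
    · subst h1; simp
    · by_cases h2 : s k = [] <;> simp [h1, h2]
  | init2 =>
    simp only [UNC_W, UNC_G]
    by_cases h1 : s = fun _ => []
    · subst h1
      have : 0 < L := hL
      simp [this]
    · by_cases h2 : (s k0).length < L <;> simp [h1, h2]

/-- closed finite sets of configurations from accepting runs -/
lemma UNC_closed_of_acc {c c' : Q × (κ → List Γ)} (h : UNC_Reach ins c c')
    (hacc : ins c'.1 = .acc) :
    ∃ F : Set (Q × (κ → List Γ)), F.Finite ∧ c ∈ F ∧
      ∀ d ∈ F, ins d.1 ≠ .rej ∧ ∀ d', UNC_step ins d = some d' → d' ∈ F := by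
  induction h using Relation.ReflTransGen.head_induction_on with
  | refl =>
    refine ⟨{c'}, Set.finite_singleton _, rfl, ?_⟩
    rintro d rfl
    refine ⟨by rw [hacc]; simp, ?_⟩
    intro d' hd
    simp [UNC_step, hacc] at hd
  | head h1 h2 ih =>
    rename_i a e
    obtain ⟨F, f1, f2, f3⟩ := ih
    refine ⟨insert a F, f1.insert _, Set.mem_insert _ _, ?_⟩
    rintro d (rfl | hd)
    · refine ⟨?_, ?_⟩
      · intro hr
        simp [UNC_step, hr] at h1
      · intro d' hd
        rw [h1] at hd
        cases hd
        exact Or.inr f2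
    · exact ⟨(f3 d hd).1, fun d' hd' => Or.inr ((f3 d hd).2 d' hd')⟩

end complete

end

section

/-- The family of triples, as a purely arithmetic function. -/
def UNC_Tn (k o e xa ya xb : ℕ) (T0 : List UNC_Tri) (n : ℕ) : List UNC_Tri :=
  T0 ++ (List.range (k + n + 1)).map (fun i : ℕ => ((o, i, i) : UNC_Tri)) ++
    (List.range (k + n + 1)).map (fun i : ℕ => ((i, o, i) : UNC_Tri)) ++
    [(e, k, k)] ++
    (List.range n).map (fun i : ℕ => ((xa, k + i + 1, k + i) : UNC_Tri)) ++
    (List.range n).map (fun i : ℕ => ((ya, k + i, k + i + 1) : UNC_Tri)) ++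
    [(o, k + n, xb)]

lemma UNC_mem_Tn {k o e xa ya xb : ℕ} {T0 : List UNC_Tri} {n : ℕ} {t : UNC_Tri} :
    t ∈ UNC_Tn k o e xa ya xb T0 n ↔ t ∈ T0 ∨ (∃ i < k + n + 1, t = (o, i, i)) ∨
      (∃ i < k + n + 1, t = (i, o, i)) ∨ t = (e, k, k) ∨
      (∃ i < n, t = (xa, k + i + 1, k + i)) ∨ (∃ i < n, t = (ya, k + i, k + i + 1)) ∨
      t = (o, k + n, xb) := by
  simp only [UNC_Tn, List.mem_append, List.mem_map, List.mem_range, List.mem_singleton, or_assoc,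
    eq_comm]

section
variable {κ Γ Q : Type} [Finite κ] [Finite Γ] [Finite Q]

instance UNC_finite_Let : Finite (UNC_Let κ Γ Q) := by
  let f : UNC_Let κ Γ Q → Q ⊕ (κ × Γ) ⊕ (κ × Γ) ⊕ κ ⊕ Unit := fun x => match x with
    | .E q => .inl q
    | .X k γ => .inr (.inl (k, γ))
    | .Y k γ => .inr (.inr (.inl (k, γ)))
    | .Z k => .inr (.inr (.inr (.inl k)))
    | .P => .inr (.inr (.inr (.inr ())))
  apply Finite.of_injective f
  intro x y h
  cases x <;> cases y <;> simp_all [f]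

/-- Names: zero or words of length at most four. -/
abbrev UNC_Nm (κ Γ Q : Type) : Type := Option {w : List (UNC_Let κ Γ Q) // w.length ≤ 4}

instance UNC_finite_Nm : Finite (UNC_Nm κ Γ Q) := by
  have : Finite {w : List (UNC_Let κ Γ Q) // w.length ≤ 4} :=
    (List.finite_length_le (UNC_Let κ Γ Q) 4).to_subtype
  infer_instance

variable (κ Γ Q) in
/-- number of base names -/
def UNC_kb : ℕ := Nat.card (UNC_Nm κ Γ Q)

/-- index of a base name -/
def UNC_nmo (x : UNC_Nm κ Γ Q) : ℕ := (Finite.equivFin (UNC_Nm κ Γ Q) x : ℕ)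

/-- index of a word -/
def UNC_name (w : List (UNC_Let κ Γ Q)) : ℕ :=
  UNC_nmo (if h : w.length ≤ 4 then some ⟨w, h⟩ else none)

lemma UNC_nmo_lt (x : UNC_Nm κ Γ Q) : UNC_nmo x < UNC_kb κ Γ Q := (Finite.equivFin _ x).2

lemma UNC_name_lt (w : List (UNC_Let κ Γ Q)) : UNC_name w < UNC_kb κ Γ Q := UNC_nmo_lt _

variable (ins : Q → UNC_Ins κ Γ Q) (k0 : κ) (a b : Γ) (q0 : Q)

/-- The set of base triples. -/
def UNC_T0s : Set UNC_Tri :=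
  {t | ∃ u v : List (UNC_Let κ Γ Q), (u ++ v).length ≤ 4 ∧
      t = (UNC_name u, UNC_name v, UNC_name (u ++ v))} ∪
  {t | ∃ l r : List (UNC_Let κ Γ Q), UNC_Rule ins k0 b l r ∧
      t = (UNC_name ([] : List (UNC_Let κ Γ Q)), UNC_name l, UNC_name r)} ∪
  {t | ∃ q : Q, ins q = .rej ∧
      t = (UNC_name ([] : List (UNC_Let κ Γ Q)), UNC_name ([.E q] : List (UNC_Let κ Γ Q)),
        UNC_nmo (none : UNC_Nm κ Γ Q))}

lemma UNC_T0s_lt (t : UNC_Tri) (h : t ∈ UNC_T0s ins k0 b) :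
    t.1 < UNC_kb κ Γ Q ∧ t.2.1 < UNC_kb κ Γ Q ∧ t.2.2 < UNC_kb κ Γ Q := by
  rcases h with (⟨u, v, _, rfl⟩ | ⟨l, r, _, rfl⟩) | ⟨q, _, rfl⟩
  · exact ⟨UNC_name_lt _, UNC_name_lt _, UNC_name_lt _⟩
  · exact ⟨UNC_name_lt _, UNC_name_lt _, UNC_name_lt _⟩
  · exact ⟨UNC_name_lt _, UNC_name_lt _, UNC_nmo_lt _⟩

lemma UNC_T0s_fin : (UNC_T0s ins k0 b).Finite := by
  refine Set.Finite.subset (((Set.finite_Iio (UNC_kb κ Γ Q))).prod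
    ((Set.finite_Iio (UNC_kb κ Γ Q)).prod (Set.finite_Iio (UNC_kb κ Γ Q)))) ?_
  intro t ht
  obtain ⟨h1, h2, h3⟩ := UNC_T0s_lt ins k0 b t ht
  exact ⟨h1, h2, h3⟩

/-- The list of base triples. -/
def UNC_T0 : List UNC_Tri := (UNC_T0s_fin ins k0 b).toFinset.toList

lemma UNC_mem_T0 (t : UNC_Tri) : t ∈ UNC_T0 ins k0 b ↔ t ∈ UNC_T0s ins k0 b := by
  simp [UNC_T0]

/-- the triples for the machine with input of size `n` -/
def UNC_mT (n : ℕ) : List UNC_Tri :=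
  UNC_Tn (UNC_kb κ Γ Q) (UNC_name ([] : List (UNC_Let κ Γ Q)))
    (UNC_name ([.E q0] : List (UNC_Let κ Γ Q)))
    (UNC_name ([.X k0 a] : List (UNC_Let κ Γ Q)))
    (UNC_name ([.Y k0 a] : List (UNC_Let κ Γ Q)))
    (UNC_name ([.X k0 b, .P] : List (UNC_Let κ Γ Q)))
    (UNC_T0 ins k0 b) n

/-- the network for the machine with input of size `n` -/
def UNC_mNet (n : ℕ) : Network :=
  UNC_gNet (UNC_kb κ Γ Q + n + 1) (UNC_mT ins k0 a b q0 n)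
    (UNC_nmo (none : UNC_Nm κ Γ Q)) (UNC_name ([.P] : List (UNC_Let κ Γ Q)))

lemma UNC_m_wf (n : ℕ) : UNC_gWf (UNC_kb κ Γ Q + n + 1) (UNC_mT ins k0 a b q0 n)
    (UNC_nmo (none : UNC_Nm κ Γ Q)) (UNC_name ([.P] : List (UNC_Let κ Γ Q))) := by
  have hw : ∀ w : List (UNC_Let κ Γ Q), UNC_name w < UNC_kb κ Γ Q + n + 1 := fun w => by
    have := UNC_name_lt w; omega
  refine ⟨by have := UNC_nmo_lt (none : UNC_Nm κ Γ Q); omega, hw _, ?_⟩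
  intro t ht
  rw [UNC_mT, UNC_mem_Tn] at ht
  rcases ht with h | ⟨i, hi, rfl⟩ | ⟨i, hi, rfl⟩ | rfl | ⟨i, hi, rfl⟩ | ⟨i, hi, rfl⟩ | rfl
  · rw [UNC_mem_T0] at h
    obtain ⟨h1, h2, h3⟩ := UNC_T0s_lt ins k0 b t h
    refine ⟨?_, ?_, ?_⟩ <;> omega
  · exact ⟨hw _, hi, hi⟩
  · exact ⟨hi, hw _, hi⟩
  · refine ⟨hw _, ?_, ?_⟩ <;> simp only <;> omega
  · refine ⟨hw _, ?_, ?_⟩ <;> simp only <;> omega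
  · refine ⟨hw _, ?_, ?_⟩ <;> simp only <;> omega
  · refine ⟨hw _, ?_, hw _⟩; simp only; omega

lemma UNC_m_valid (n : ℕ) : NetworkValid (UNC_mNet ins k0 a b q0 n) :=
  UNC_g_valid (UNC_m_wf ins k0 a b q0 n)

lemma UNC_m_sound (n : ℕ) {c : Q × (κ → List Γ)} (hc : ins c.1 = .rej)
    (hr : UNC_Reach ins (q0, UNC_ini k0 a b n) c) {q : ℕ} (hq : 2 ≤ q) :
    ¬ SolvableWith (UNC_mNet ins k0 a b q0 n) q := by
  intro hs
  have hw : ∀ w : List (UNC_Let κ Γ Q), UNC_name w < UNC_kb κ Γ Q + n + 1 := fun w => by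
    have := UNC_name_lt w; omega
  have hmem : ∀ t, t ∈ UNC_mT ins k0 a b q0 n ↔ _ := fun t => UNC_mem_Tn
  obtain ⟨V, zero, act, v1, h1, h2, h3, h4, h5⟩ := UNC_g_sound (UNC_m_wf ins k0 a b q0 n)
    (o := UNC_name ([] : List (UNC_Let κ Γ Q))) (hw _)
    (fun i hi => (hmem _).2 (Or.inr (Or.inl ⟨i, hi, rfl⟩)))
    (fun i hi => (hmem _).2 (Or.inr (Or.inr (Or.inl ⟨i, hi, rfl⟩)))) hq hs
  let A : UNC_Let κ Γ Q → V → V := fun x v => act (UNC_name [x]) v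
  have h1' : ∀ t, t ∈ UNC_T0s ins k0 b → ∀ v, act t.1 (act t.2.1 v) = act t.2.2 v := fun t ht =>
    h1 t ((hmem _).2 (Or.inl ((UNC_mem_T0 _ _ _ _).2 ht)))
  have hfold : ∀ w : List (UNC_Let κ Γ Q), w.length ≤ 4 → ∀ v, act (UNC_name w) v = w.foldr A v := by
    intro w
    induction w with
    | nil => intro _ v; exact h2 v
    | cons x w ih =>
      intro hl v
      have := h1' (UNC_name [x], UNC_name w, UNC_name (x :: w))
        (Or.inl (Or.inl ⟨[x], w, hl, rfl⟩)) v
      simp only at this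
      rw [List.foldr_cons, ← ih (by simp at hl; omega), ← this]
  have hR : ∀ l r, UNC_Rule ins k0 b l r → ∀ v, l.foldr A v = r.foldr A v := by
    intro l r h v
    rw [← hfold l h.len.1, ← hfold r h.len.2]
    have := h1' _ (Or.inl (Or.inr ⟨l, r, h, rfl⟩)) v
    simp only at this
    rwa [h2] at this
  have h0 : ∀ x, A x zero = zero := fun x => h4 _ (hw _)
  have hrej : ∀ q, ins q = .rej → ∀ v, A (.E q) v = zero := by
    intro q hq v
    have := h1' _ (Or.inr ⟨q, hq, rfl⟩) v
    simp only at this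
    rwa [h2, h3] at this
  refine UNC_rej_contra hR h0 hrej v1 h5 n a (fun i => act (UNC_kb κ Γ Q + i) v1) q0
    ?_ ?_ ?_ ?_ hc hr
  · exact h1 _ ((hmem _).2 (Or.inr (Or.inr (Or.inr (Or.inl rfl))))) v1
  · intro i hi
    exact h1 _ ((hmem _).2 (Or.inr (Or.inr (Or.inr (Or.inr (Or.inl ⟨i, hi, rfl⟩)))))) v1
  · intro i hi
    exact h1 _ ((hmem _).2 (Or.inr (Or.inr (Or.inr (Or.inr (Or.inr (Or.inl ⟨i, hi, rfl⟩))))))) v1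
  · have := h1 _ ((hmem _).2 (Or.inr (Or.inr (Or.inr (Or.inr (Or.inr (Or.inr rfl))))))) v1
    simp only at this
    rw [h2, hfold _ (by simp)] at this
    simpa only [List.foldr] using this

/-- raw action of base names -/
def UNC_gB (F : Set (Q × (κ → List Γ))) (L : ℕ) (x : UNC_Nm κ Γ Q) (s : κ → List Γ) :
    Option (κ → List Γ) :=
  match x with
  | none => none
  | some w => UNC_W F L w.1 s

/-- raw action of all names -/
def UNC_gA (F : Set (Q × (κ → List Γ))) (L n : ℕ) (i : ℕ) (s : κ → List Γ) :
    Option (κ → List Γ) :=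
  if h : i < UNC_kb κ Γ Q then UNC_gB F L ((Finite.equivFin (UNC_Nm κ Γ Q)).symm ⟨i, h⟩) s
  else if s = UNC_ini k0 a b (n - (i - UNC_kb κ Γ Q)) then some (fun _ => []) else none

lemma UNC_gA_nmo (F : Set (Q × (κ → List Γ))) (L n : ℕ) (x : UNC_Nm κ Γ Q) (s : κ → List Γ) :
    UNC_gA k0 a b F L n (UNC_nmo x) s = UNC_gB F L x s := by
  have h := UNC_nmo_lt x
  rw [UNC_gA, dif_pos h]
  congr 1
  exact (Finite.equivFin (UNC_Nm κ Γ Q)).symm_apply_apply x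

lemma UNC_gA_name (F : Set (Q × (κ → List Γ))) (L n : ℕ) (w : List (UNC_Let κ Γ Q))
    (hw : w.length ≤ 4) (s : κ → List Γ) :
    UNC_gA k0 a b F L n (UNC_name w) s = UNC_W F L w s := by
  rw [UNC_name, UNC_gA_nmo, dif_pos hw]
  rfl

lemma UNC_gA_lev (F : Set (Q × (κ → List Γ))) (L n i : ℕ) (s : κ → List Γ) :
    UNC_gA k0 a b F L n (UNC_kb κ Γ Q + i) s =
      if s = UNC_ini k0 a b (n - i) then some (fun _ => []) else none := by
  rw [UNC_gA, dif_neg (by omega)]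
  simp

lemma UNC_ini_k0 (j : ℕ) : UNC_ini k0 a b j k0 = List.replicate j a ++ [b] := by
  simp [UNC_ini]

lemma UNC_G_len (F : Set (Q × (κ → List Γ))) (L : ℕ) (x : UNC_Let κ Γ Q) (s r : κ → List Γ)
    (hs : ∀ k, (s k).length ≤ L) (h : UNC_G F L x s = some r) : ∀ k, (r k).length ≤ L := by
  cases x with
  | E q => simp only [UNC_G] at h; split_ifs at h; cases h; exact hs
  | Z q => simp only [UNC_G] at h; split_ifs at h; cases h; exact hs
  | P => simp only [UNC_G] at h; split_ifs at h; cases h; exact hs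
  | X k γ =>
    simp only [UNC_G] at h; split_ifs at h; cases h
    intro k'
    by_cases hk : k' = k
    · subst hk
      have := hs k'
      simp; omega
    · rw [Function.update_of_ne hk]; exact hs k'
  | Y k γ =>
    simp only [UNC_G] at h; split_ifs at h; cases h
    intro k'
    by_cases hk : k' = k
    · subst hk
      simp; omega
    · rw [Function.update_of_ne hk]; exact hs k'

lemma UNC_W_len (F : Set (Q × (κ → List Γ))) (L : ℕ) (w : List (UNC_Let κ Γ Q)) (s r : κ → List Γ)
    (hs : ∀ k, (s k).length ≤ L) (h : UNC_W F L w s = some r) : ∀ k, (r k).length ≤ L := by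
  induction w generalizing s with
  | nil => cases h; exact hs
  | cons x w ih =>
    simp only [UNC_W] at h
    rw [Option.bind_eq_some_iff] at h
    obtain ⟨t, h1, h2⟩ := h
    exact ih t (UNC_G_len F L x s t hs h1) h2

lemma UNC_gA_len (F : Set (Q × (κ → List Γ))) (L n i : ℕ) (s r : κ → List Γ)
    (hs : ∀ k, (s k).length ≤ L) (h : UNC_gA k0 a b F L n i s = some r) :
    ∀ k, (r k).length ≤ L := by
  rw [UNC_gA] at h
  split_ifs at h with h1 h2
  · cases hx : (Finite.equivFin (UNC_Nm κ Γ Q)).symm ⟨i, h1⟩ with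
    | none => rw [hx] at h; cases h
    | some w => rw [hx] at h; exact UNC_W_len F L w.1 s r hs h
  · cases h; intro k; simp

lemma UNC_gA_mT {F : Set (Q × (κ → List Γ))} {L n : ℕ} (hL : n + 1 < L)
    (hF : ∀ c ∈ F, ins c.1 ≠ .rej ∧ (∀ k, (c.2 k).length < L) ∧
      ∀ c', UNC_step ins c = some c' → c' ∈ F)
    (h0 : (q0, UNC_ini k0 a b n) ∈ F) (t : UNC_Tri) (ht : t ∈ UNC_mT ins k0 a b q0 n)
    (s : κ → List Γ) :
    (UNC_gA k0 a b F L n t.1 s).bind (UNC_gA k0 a b F L n t.2.1) =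
      UNC_gA k0 a b F L n t.2.2 s := by
  have hone : ∀ s, UNC_gA k0 a b F L n (UNC_name ([] : List (UNC_Let κ Γ Q))) s = some s :=
    fun s => UNC_gA_name k0 a b F L n [] (by simp) s
  rw [UNC_mT, UNC_mem_Tn] at ht
  rcases ht with h | ⟨i, hi, rfl⟩ | ⟨i, hi, rfl⟩ | rfl | ⟨i, hi, rfl⟩ | ⟨i, hi, rfl⟩ | rfl
  · rw [UNC_mem_T0] at h
    rcases h with (⟨u, v, hl, rfl⟩ | ⟨l, r, hlr, rfl⟩) | ⟨q, hq, rfl⟩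
    · simp only
      have hl' := hl
      rw [List.length_append] at hl'
      rw [UNC_gA_name _ _ _ _ _ _ u (by omega), UNC_gA_name _ _ _ _ _ _ _ hl, UNC_W_append]
      congr 1
      funext r
      rw [UNC_gA_name _ _ _ _ _ _ v (by omega)]
    · simp only
      rw [hone, Option.bind_some, UNC_gA_name _ _ _ _ _ _ _ hlr.len.1,
        UNC_gA_name _ _ _ _ _ _ _ hlr.len.2]
      exact UNC_W_rule (by omega) (fun c hc => (hF c hc).2) hlr s
    · simp only
      rw [hone, Option.bind_some, UNC_gA_name _ _ _ _ _ _ _ (by simp), UNC_gA_nmo]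
      have : (q, s) ∉ F := fun h => (hF _ h).1 hq
      simp [UNC_W, UNC_G, this, UNC_gB]
  · simp only
    rw [hone, Option.bind_some]
  · simp only
    have : UNC_gA k0 a b F L n (UNC_name ([] : List (UNC_Let κ Γ Q))) = some := funext hone
    rw [this, Option.bind_fun_some]
  · simp only
    have := UNC_gA_lev (Q := Q) k0 a b F L n 0
    simp only [Nat.add_zero, Nat.sub_zero] at this
    rw [UNC_gA_name _ _ _ _ _ _ _ (by simp), this]
    by_cases hs : s = UNC_ini k0 a b n
    · subst hs
      simp [UNC_W, UNC_G, h0, this]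
    · by_cases h2 : (q0, s) ∈ F <;> simp [UNC_W, UNC_G, hs, h2, this]
  · simp only
    rw [UNC_gA_name _ _ _ _ _ _ _ (by simp), UNC_gA_lev]
    have e : n - i = n - (i + 1) + 1 := by omega
    by_cases h1 : (s k0).head? = some a
    · simp only [UNC_W, UNC_G, h1, if_true, Option.bind_some, add_assoc, UNC_gA_lev]
      rw [e]
      congr 1
      rw [UNC_ini_succ]
      apply propext
      constructor
      · intro h
        rw [← h, Function.update_self, Function.update_idem, ← UNC_head_tail h1,
          Function.update_eq_self]
      · intro h
        rw [h]; simp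
    · have : s ≠ UNC_ini k0 a b (n - i) := by
        rintro rfl
        rw [e, UNC_ini_k0] at h1
        simp [List.replicate_succ] at h1
      simp [UNC_W, UNC_G, h1, this]
  · simp only
    rw [UNC_gA_name _ _ _ _ _ _ _ (by simp), add_assoc, UNC_gA_lev]
    have e : n - i = n - (i + 1) + 1 := by omega
    by_cases h1 : (s k0).length < L
    · simp only [UNC_W, UNC_G, h1, if_true, Option.bind_some, UNC_gA_lev]
      rw [e]
      congr 1
      rw [UNC_ini_succ]
      apply propext
      constructor
      · intro h
        have h3 := congrArg (fun f => Function.update f k0 (f k0).tail) h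
        simpa using h3
      · intro h
        rw [h]
    · have : s ≠ UNC_ini k0 a b (n - (i + 1)) := by
        rintro rfl
        rw [UNC_ini_k0] at h1
        simp at h1
        omega
      simp [UNC_W, UNC_G, h1, this]
  · simp only
    rw [hone, Option.bind_some, UNC_gA_lev, UNC_gA_name _ _ _ _ _ _ _ (by simp), Nat.sub_self]
    by_cases h1 : (s k0).head? = some b
    · by_cases h2 : s = UNC_ini k0 a b 0
      · subst h2
        have h3 : Function.update (UNC_ini k0 a b 0) k0 (UNC_ini k0 a b 0 k0).tail
            = fun _ => [] := by
          funext x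
          by_cases hx : x = k0
          · subst hx; simp [UNC_ini]
          · simp [UNC_ini, hx]
        simp [UNC_W, UNC_G, h1, h3]
      · have h3 : Function.update s k0 (s k0).tail ≠ fun _ => [] := by
          intro h
          apply h2
          have h4 := congrArg (fun f => Function.update f k0 [b]) h
          simp only [Function.update_idem] at h4
          have h5 := congrFun h k0
          simp only [Function.update_self] at h5
          have h6 := UNC_head_tail h1
          rw [h5] at h6
          rw [UNC_ini, List.replicate_zero, List.nil_append, ← h4, ← h6, Function.update_eq_self]
        simp [UNC_W, UNC_G, h1, h2, h3]
    · have h2 : s ≠ UNC_ini k0 a b 0 := by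
        rintro rfl
        rw [UNC_ini_k0] at h1
        simp at h1
      simp [UNC_W, UNC_G, h1, h2]

lemma UNC_m_complete (n : ℕ) {c : Q × (κ → List Γ)} (hc : ins c.1 = .acc)
    (hr : UNC_Reach ins (q0, UNC_ini k0 a b n) c) {cc : ℕ} (hcc : 2 ≤ cc) :
    ∃ m, 1 ≤ m ∧ SolvableWith (UNC_mNet ins k0 a b q0 n) (cc ^ m) := by
  obtain ⟨F, f1, f2, f3⟩ := UNC_closed_of_acc hr hc
  obtain ⟨L, hL1, hL⟩ : ∃ L, n + 1 < L ∧ ∀ c ∈ F, ∀ k, (c.2 k).length < L := by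
    have hfin : (⋃ k : κ, (fun c : Q × (κ → List Γ) => (c.2 k).length) '' F).Finite :=
      Set.finite_iUnion fun k => f1.image _
    obtain ⟨B, hB⟩ := hfin.bddAbove
    refine ⟨max B (n+1) + 1, by omega, ?_⟩
    intro c hc k
    have := hB (Set.mem_iUnion.2 ⟨k, c, hc, rfl⟩)
    simp only at this
    omega
  let S := {s : κ → List Γ // ∀ k, (s k).length ≤ L}
  have : Finite S := by
    have : Finite {l : List Γ // l.length ≤ L} := (List.finite_length_le Γ L).to_subtype
    let f : S → (κ → {l : List Γ // l.length ≤ L}) := fun s k => ⟨s.1 k, s.2 k⟩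
    apply Finite.of_injective f
    intro x y h
    apply Subtype.ext
    funext k
    exact congrArg Subtype.val (congrFun h k)
  let g0 := UNC_gA (Q := Q) k0 a b F L n
  let g : ℕ → S → Option S := fun i s =>
    (g0 i s.1).bind (fun r => if h : ∀ k, (r k).length ≤ L then some ⟨r, h⟩ else none)
  have hg : ∀ i s, (g i s).map Subtype.val = g0 i s.1 := by
    intro i s
    cases hx : g0 i s.1 with
    | none => simp [g, hx]
    | some r =>
      have := UNC_gA_len k0 a b F L n i s.1 r s.2 hx
      simp [g, hx, this]
  refine UNC_g_complete (UNC_m_wf ins k0 a b q0 n) hcc g ?_ ?_ ?_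
  · intro t ht s
    apply Option.map_injective Subtype.val_injective
    have e0 : (g0 t.1 s.1).bind (g0 t.2.1) = g0 t.2.2 s.1 := UNC_gA_mT ins k0 a b q0 hL1
      (fun c hc => ⟨(f3 c hc).1, hL c hc, (f3 c hc).2⟩) f2 t ht s.1
    rw [hg, ← e0]
    have e1 := hg t.1 s
    cases hx : g t.1 s with
    | none =>
      rw [hx] at e1
      rw [← e1]; rfl
    | some r =>
      rw [hx] at e1
      rw [← e1]
      exact hg t.2.1 r
  · intro s
    have : g0 (UNC_nmo (none : UNC_Nm κ Γ Q)) s.1 = none := UNC_gA_nmo k0 a b F L n none s.1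
    simp [g, this]
  · refine ⟨⟨fun _ => [], by simp⟩, ?_⟩
    intro h
    have h2 := hg (UNC_name ([.P] : List (UNC_Let κ Γ Q))) ⟨fun _ => [], by simp⟩
    rw [h] at h2
    have h3 := UNC_gA_name (Q := Q) k0 a b F L n [.P] (by simp) (fun _ => [])
    rw [show UNC_gA k0 a b F L n _ _ = _ from h2.symm] at h3
    simp [UNC_W, UNC_G] at h3

end

end

section

section sim
variable {κ G Λ σ : Type} (M : Λ → Turing.TM2.Stmt (fun _ : κ => G) Λ σ) (S : Finset Λ)
  (k0 : κ) (a : G)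

/-- States of the generic machine simulating a TM2 machine. -/
abbrev UNC_QQ : Type :=
  ({st : Turing.TM2.Stmt (fun _ : κ => G) Λ σ // some st ∈ Turing.TM2.stmts M S} × σ) ⊕ Bool

lemma UNC_finQ [Finite σ] : Finite (UNC_QQ M S) := by
  have : Finite {st : Turing.TM2.Stmt (fun _ : κ => G) Λ σ //
      some st ∈ Turing.TM2.stmts M S} := by
    have h : Set.Finite {st : Turing.TM2.Stmt (fun _ : κ => G) Λ σ |
        some st ∈ Turing.TM2.stmts M S} :=
      Set.Finite.preimage (f := some) (Option.some_injective _).injOn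
        (Turing.TM2.stmts M S).finite_toSet
    exact h.to_subtype
  infer_instance

/-- Build a state. -/
def UNC_mkQ (st : Turing.TM2.Stmt (fun _ : κ => G) Λ σ) (v : σ) : UNC_QQ M S :=
  if h : some st ∈ Turing.TM2.stmts M S then Sum.inl (⟨st, h⟩, v) else Sum.inr false

/-- Instructions for a statement. -/
def UNC_insS (st : Turing.TM2.Stmt (fun _ : κ => G) Λ σ) (v : σ) : UNC_Ins κ G (UNC_QQ M S) :=
  match st with
  | .push k f q => .push k (f v) (UNC_mkQ M S q v)
  | .peek k f q => .peek k (fun o => UNC_mkQ M S q (f v o))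
  | .pop k f q => .pop k (fun o => UNC_mkQ M S q (f v o))
  | .load f q => .jump (UNC_mkQ M S q (f v))
  | .branch p q₁ q₂ => .jump (cond (p v) (UNC_mkQ M S q₁ v) (UNC_mkQ M S q₂ v))
  | .goto l => .jump (UNC_mkQ M S (M (l v)) v)
  | .halt => .pop k0 (fun o => if o = some a then Sum.inr false else Sum.inr true)

/-- The instruction table. -/
def UNC_insQ (q : UNC_QQ M S) : UNC_Ins κ G (UNC_QQ M S) :=
  match q with
  | .inl (st, v) => UNC_insS M S k0 a st.1 v
  | .inr true => .acc
  | .inr false => .rej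

/-- Translation of configurations. -/
def UNC_conf (c : Turing.TM2.Cfg (fun _ : κ => G) Λ σ) : UNC_QQ M S × (κ → List G) :=
  match c.l with
  | some l => (UNC_mkQ M S (M l) c.var, c.stk)
  | none => (if (c.stk k0).head? = some a then Sum.inr false else Sum.inr true,
      Function.update c.stk k0 (c.stk k0).tail)

lemma UNC_sim_aux (hS : ∀ q ∈ S, Turing.TM2.SupportsStmt S (M q)) [inst : DecidableEq κ]
    (st : Turing.TM2.Stmt (fun _ : κ => G) Λ σ) (h : some st ∈ Turing.TM2.stmts M S) (v : σ)
    (T : κ → List G) :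
    UNC_Reach (UNC_insQ M S k0 a) (UNC_mkQ M S st v, T)
      (UNC_conf M S k0 a (Turing.TM2.stepAux st v T)) := by
  obtain rfl : inst = fun x y => Classical.propDecidable (x = y) := Subsingleton.elim _ _
  have hm : ∀ (st) (h : some st ∈ Turing.TM2.stmts M S) v,
      UNC_insQ M S k0 a (UNC_mkQ M S st v) = UNC_insS M S k0 a st v := by
    intro st h v
    rw [UNC_mkQ, dif_pos h]
    rfl
  have sub : ∀ {p q}, some q ∈ Turing.TM2.stmts M S → p ∈ Turing.TM2.stmts₁ q →
    some p ∈ Turing.TM2.stmts M S := fun h1 h2 => Turing.TM2.stmts_trans h2 h1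
  induction st generalizing v T with
  | push k f q ih =>
    refine Relation.ReflTransGen.head ?_ (ih (sub h ?_) v _)
    · simp only [UNC_step, hm _ h, UNC_insS]
    · simp [Turing.TM2.stmts₁, Turing.TM2.stmts₁_self]
  | peek k f q ih =>
    refine Relation.ReflTransGen.head ?_ (ih (sub h ?_) _ _)
    · simp only [UNC_step, hm _ h, UNC_insS]
    · simp [Turing.TM2.stmts₁, Turing.TM2.stmts₁_self]
  | pop k f q ih =>
    refine Relation.ReflTransGen.head ?_ (ih (sub h ?_) _ _)
    · simp only [UNC_step, hm _ h, UNC_insS]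
    · simp [Turing.TM2.stmts₁, Turing.TM2.stmts₁_self]
  | load f q ih =>
    refine Relation.ReflTransGen.head ?_ (ih (sub h ?_) _ _)
    · simp only [UNC_step, hm _ h, UNC_insS]
    · simp [Turing.TM2.stmts₁, Turing.TM2.stmts₁_self]
  | branch p q₁ q₂ ih1 ih2 =>
    cases hp : p v with
    | true =>
      simp only [Turing.TM2.stepAux, hp, cond_true]
      refine Relation.ReflTransGen.head ?_ (ih1 (sub h ?_) _ _)
      · simp only [UNC_step, hm _ h, UNC_insS, hp, cond_true]
      · simp [Turing.TM2.stmts₁, Turing.TM2.stmts₁_self]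
    | false =>
      simp only [Turing.TM2.stepAux, hp, cond_false]
      refine Relation.ReflTransGen.head ?_ (ih2 (sub h ?_) _ _)
      · simp only [UNC_step, hm _ h, UNC_insS, hp, cond_false]
      · simp [Turing.TM2.stmts₁, Turing.TM2.stmts₁_self]
  | goto l =>
    refine Relation.ReflTransGen.single ?_
    simp only [UNC_step, hm _ h, UNC_insS, Turing.TM2.stepAux, UNC_conf]
  | halt =>
    refine Relation.ReflTransGen.single ?_
    simp only [UNC_step, hm _ h, UNC_insS, Turing.TM2.stepAux, UNC_conf]
    congr

lemma UNC_sim (hS : ∀ q ∈ S, Turing.TM2.SupportsStmt S (M q)) [Inhabited Λ]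
    (hd : (default : Λ) ∈ S) [inst : DecidableEq κ]
    {c c' : Turing.TM2.Cfg (fun _ : κ => G) Λ σ} (hc : c.l ∈ Finset.insertNone S)
    (h : StateTransition.Reaches (Turing.TM2.step M) c c') :
    UNC_Reach (UNC_insQ M S k0 a) (UNC_conf M S k0 a c) (UNC_conf M S k0 a c') ∧
      c'.l ∈ Finset.insertNone S := by
  induction h with
  | refl => exact ⟨.refl, hc⟩
  | tail h1 h2 ih =>
    rename_i d d'
    obtain ⟨i1, i2⟩ := ih
    refine ⟨i1.trans ?_, Turing.TM2.step_supports M ⟨hd, hS⟩ h2 i2⟩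
    obtain ⟨l, v, T⟩ := d
    cases l with
    | none => cases h2
    | some l =>
      simp only [Turing.TM2.step, Option.mem_def, Option.some.injEq] at h2
      subst h2
      refine UNC_sim_aux M S k0 a hS (M l) ?_ v T
      simp only [Finset.some_mem_insertNone] at i2
      simp only [Turing.TM2.stmts, Finset.some_mem_insertNone, Finset.mem_biUnion]
      exact ⟨l, i2, Turing.TM2.stmts₁_self⟩

end sim

open Turing.PartrecToTM2 in
lemma UNC_trNat (n : ℕ) : trNat (2 ^ n - 1) = List.replicate n Γ'.bit1 := by
  have key : ∀ m : ℕ, trNat (2 * m + 1) = Γ'.bit1 :: trNat m := by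
    intro m
    rw [trNat, trNat]
    have : ((2 * m + 1 : ℕ) : Num) = Num.bit1 (m : Num) := by
      rw [← Num.of_to_nat (Num.bit1 (m : Num))]
      congr 1
      rw [Num.cast_bit1, Num.to_of_nat]
    rw [this]
    cases (m : Num) with
    | zero => rfl
    | pos p => rfl
  induction n with
  | zero => simp
  | succ n ih =>
    have : 2 ^ (n+1) - 1 = 2 * (2 ^ n - 1) + 1 := by
      have := Nat.one_le_two_pow (n := n)
      omega
    rw [this, key, ih]; rfl

instance UNC_fin_K : Finite Turing.PartrecToTM2.K' := by
  have : Set.Finite (Set.univ : Set Turing.PartrecToTM2.K') := by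
    refine Set.Finite.subset (Set.toFinite
      {Turing.PartrecToTM2.K'.main, .rev, .aux, .stack}) ?_
    intro x _
    cases x <;> simp
  exact Set.finite_univ_iff.1 this

/-- The logarithm used to read the input. -/
def UNC_lg (m : ℕ) : ℕ := Nat.findGreatest (fun i => 2 ^ i ≤ m + 1) (m + 1)

lemma UNC_lg_pow (n : ℕ) : UNC_lg (2 ^ n - 1) = n := by
  have h := Nat.one_le_two_pow (n := n)
  have h2 : n < 2 ^ n := Nat.lt_two_pow_self
  rw [UNC_lg, Nat.sub_add_cancel h, Nat.findGreatest_eq_iff]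
  refine ⟨h2.le, fun _ => le_rfl, ?_⟩
  intro m hm _ hle
  exact absurd ((Nat.pow_le_pow_iff_right (by norm_num)).1 hle) (by omega)

lemma UNC_lg_primrec : Primrec UNC_lg := by
  have hpow : Primrec₂ (fun x y : ℕ => x ^ y) := Primrec₂.unpaired'.1 Nat.Primrec.pow
  refine Primrec.nat_findGreatest Primrec.succ ?_
  exact Primrec.nat_le.comp₂ (hpow.comp₂ (Primrec₂.const 2) Primrec₂.right)
    (Primrec.succ.comp₂ Primrec₂.left)

open Turing.PartrecToTM2 in
lemma UNC_machine (f : ℕ →. ℕ) (hf : Partrec f) :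
    ∃ (κ Γ Q : Type) (_ : Finite κ) (_ : Finite Γ) (_ : Finite Q) (ins : Q → UNC_Ins κ Γ Q)
      (k0 : κ) (a b : Γ) (q0 : Q), ∀ n,
      (0 ∈ f n → ∃ c, ins c.1 = .acc ∧ UNC_Reach ins (q0, UNC_ini k0 a b n) c) ∧
      (1 ∈ f n → ∃ c, ins c.1 = .rej ∧ UNC_Reach ins (q0, UNC_ini k0 a b n) c) := by
  have hf2 : Partrec (fun m => f (UNC_lg m)) := hf.comp UNC_lg_primrec.to_comp
  obtain ⟨cd, hcd⟩ := Turing.ToPartrec.Code.exists_code (Nat.Partrec'.part_iff₁.2 hf2)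
  have hsup := tr_supports cd Cont'.halt
  have hsup1 := hsup.1
  have hsup2 := hsup.2
  let S := codeSupp cd Cont'.halt
  refine ⟨K', Γ', UNC_QQ tr S, inferInstance, inferInstance, @UNC_finQ K' Γ' Λ' (Option Γ') tr S inferInstance,
    UNC_insQ tr S K'.main Γ'.bit1, K'.main, Γ'.bit1, Γ'.cons,
    UNC_mkQ tr S (tr (trNormal cd Cont'.halt)) none, ?_⟩
  intro n
  have key : ∀ y, y ∈ f n → UNC_Reach (UNC_insQ tr S K'.main Γ'.bit1)
      (UNC_mkQ tr S (tr (trNormal cd Cont'.halt)) none, UNC_ini K'.main Γ'.bit1 Γ'.cons n)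
      (UNC_conf tr S K'.main Γ'.bit1 (Turing.PartrecToTM2.halt [y])) := by
    intro y hy
    have h1 := tr_eval cd [2 ^ n - 1]
    have h2 := hcd ⟨[2 ^ n - 1], rfl⟩
    simp only at h2
    rw [h2] at h1
    have h3 : Turing.PartrecToTM2.halt [y] ∈
        StateTransition.eval (Turing.TM2.step tr) (Turing.PartrecToTM2.init cd [2 ^ n - 1]) := by
      rw [h1]
      have h6 : y ∈ f (UNC_lg (2 ^ n - 1)) := by rwa [UNC_lg_pow]
      exact Part.mem_map _ (Part.mem_map _ h6)
    have h4 := (StateTransition.mem_eval.1 h3).1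
    have h5 := (@UNC_sim K' Γ' Λ' (Option Γ') tr S K'.main Γ'.bit1 hsup2
      ⟨trNormal cd Cont'.halt⟩ hsup1 _ _ _
      (Finset.some_mem_insertNone.2 hsup1) h4).1
    convert h5 using 1
    unfold Turing.PartrecToTM2.init
    simp only [UNC_conf, Prod.mk.injEq, true_and]
    funext k
    cases k <;> simp [UNC_ini, UNC_trNat]
  constructor
  · intro h
    refine ⟨_, ?_, key 0 h⟩
    simp [UNC_conf, Turing.PartrecToTM2.halt, UNC_insQ]
  · intro h
    refine ⟨_, ?_, key 1 h⟩
    have h1 : trNat 1 = [Γ'.bit1] := UNC_trNat 1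
    simp [UNC_conf, Turing.PartrecToTM2.halt, UNC_insQ, h1]

end

section

section prim
variable {α β γ δ : Type} [Primcodable α] [Primcodable β] [Primcodable γ] [Primcodable δ]

lemma UNC_pr_id : Primrec (fun a : α => a) := Primrec.id
lemma UNC_pr_fst {f : α → β × γ} (h : Primrec f) : Primrec (fun a => (f a).1) :=
  Primrec.fst.comp h
lemma UNC_pr_snd {f : α → β × γ} (h : Primrec f) : Primrec (fun a => (f a).2) :=
  Primrec.snd.comp h
lemma UNC_pr_add {f g : α → ℕ} (h : Primrec f) (h' : Primrec g) : Primrec (fun a => f a + g a) :=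
  Primrec.nat_add.comp h h'
lemma UNC_pr_mul {f g : α → ℕ} (h : Primrec f) (h' : Primrec g) : Primrec (fun a => f a * g a) :=
  Primrec.nat_mul.comp h h'
lemma UNC_pr_pair {f : α → β} {g : α → γ} (h : Primrec f) (h' : Primrec g) :
    Primrec (fun a => (f a, g a)) := Primrec.pair h h'
lemma UNC_pr_cons {f : α → β} {g : α → List β} (h : Primrec f) (h' : Primrec g) :
    Primrec (fun a => f a :: g a) := Primrec.list_cons.comp h h'
lemma UNC_pr_app {f g : α → List β} (h : Primrec f) (h' : Primrec g) :
    Primrec (fun a => f a ++ g a) := Primrec.list_append.comp h h'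
lemma UNC_pr_len {f : α → List β} (h : Primrec f) :
    Primrec (fun a => (f a).length) := Primrec.list_length.comp h
lemma UNC_pr_range {f : α → ℕ} (h : Primrec f) :
    Primrec (fun a => List.range (f a)) := Primrec.list_range.comp h
lemma UNC_pr_map {f : α → List β} {g : α → β → γ} (h : Primrec f)
    (h' : Primrec (fun p : α × β => g p.1 p.2)) :
    Primrec (fun a => (f a).map (fun b => g a b)) := Primrec.list_map h h'
lemma UNC_pr_flatMap {f : α → List β} {g : α → β → List γ} (h : Primrec f)
    (h' : Primrec (fun p : α × β => g p.1 p.2)) :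
    Primrec (fun a => (f a).flatMap (fun b => g a b)) := Primrec.list_flatMap h h'
lemma UNC_pr_getD {f : α → List β} {g : α → ℕ} (d : β) (h : Primrec f) (h' : Primrec g) :
    Primrec (fun a => (f a).getD (g a) d) := (Primrec.list_getD d).comp h h'
lemma UNC_pr_repl {f : α → ℕ} (d : β) (h : Primrec f) :
    Primrec (fun a => List.replicate (f a) d) := by
  have := UNC_pr_map (UNC_pr_range h) (g := fun _ _ => d) (Primrec.const d)
  refine this.of_eq fun a => ?_
  simp

lemma UNC_pr_parity {f : α → ℕ} (h : Primrec f) :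
    Primrec (fun a => if f a % 2 = 0 then [0, 1] else [1, 2]) := by
  have h1 : PrimrecPred (fun a => f a % 2 = 0) :=
    Primrec.eq.comp (Primrec.nat_mod.comp h (Primrec.const 2)) (Primrec.const 0)
  exact Primrec.ite h1 (Primrec.const _) (Primrec.const _)

set_option maxHeartbeats 2000000 in
lemma UNC_pr_toNet {f : α → List (List ℕ)} {g : α → List (List ℕ × List ℕ × List ℕ)}
    (hf : Primrec f) (hg : Primrec g) : Primrec (fun a => UNC_toNet (f a) (g a)) := by
  unfold UNC_toNet UNC_edges
  repeat' with_reducible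
    first
    | assumption | exact Primrec.const _ | exact UNC_pr_id
    | exact hf.comp Primrec.fst | exact hg.comp Primrec.fst
    | exact hf.comp (Primrec.fst.comp Primrec.fst) | exact hg.comp (Primrec.fst.comp Primrec.fst)
    | exact Primrec.fst | exact Primrec.snd
    | apply UNC_pr_fst | apply UNC_pr_snd
    | apply UNC_pr_add | apply UNC_pr_mul
    | apply UNC_pr_cons | apply UNC_pr_app | apply UNC_pr_len | apply UNC_pr_range
    | apply UNC_pr_map | apply UNC_pr_flatMap | apply UNC_pr_getD | apply UNC_pr_repl | apply UNC_pr_pair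

lemma UNC_pr_qVs {K : α → ℕ} {f : α → List UNC_Quad}
    (hK : Primrec K) (hf : Primrec f) : Primrec (fun a => UNC_qVs (K a) (f a)) := by
  unfold UNC_qVs
  repeat' with_reducible
    first
    | assumption | exact Primrec.const _ | exact UNC_pr_id
    | apply UNC_pr_parity
    | exact Primrec.fst | exact Primrec.snd
    | apply UNC_pr_fst | apply UNC_pr_snd
    | apply UNC_pr_add | apply UNC_pr_mul
    | apply UNC_pr_cons | apply UNC_pr_app | apply UNC_pr_len | apply UNC_pr_range
    | apply UNC_pr_map | apply UNC_pr_flatMap | apply UNC_pr_getD | apply UNC_pr_repl | apply UNC_pr_pair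

set_option maxHeartbeats 2000000 in
lemma UNC_pr_qDs {K w : α → ℕ} {f : α → List UNC_Quad}
    (hK : Primrec K) (hf : Primrec f) (hw : Primrec w) :
    Primrec (fun a => UNC_qDs (K a) (f a) (w a)) := by
  unfold UNC_qDs
  repeat' with_reducible
    first
    | assumption | exact Primrec.const _ | exact UNC_pr_id
    | exact hf.comp Primrec.fst | exact hK.comp Primrec.fst
    | exact Primrec.fst | exact Primrec.snd
    | apply UNC_pr_fst | apply UNC_pr_snd
    | apply UNC_pr_add | apply UNC_pr_mul
    | apply UNC_pr_cons | apply UNC_pr_app | apply UNC_pr_len | apply UNC_pr_range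
    | apply UNC_pr_map | apply UNC_pr_flatMap | apply UNC_pr_getD | apply UNC_pr_repl | apply UNC_pr_pair

set_option maxHeartbeats 2000000 in
lemma UNC_pr_fQuads {K : α → ℕ} {f : α → List UNC_Five}
    (hK : Primrec K) (hf : Primrec f) : Primrec (fun a => UNC_fQuads (K a) (f a)) := by
  unfold UNC_fQuads
  repeat' with_reducible
    first
    | assumption | exact Primrec.const _ | exact UNC_pr_id
    | exact hf.comp Primrec.fst | exact hK.comp Primrec.fst
    | exact Primrec.fst | exact Primrec.snd
    | apply UNC_pr_fst | apply UNC_pr_snd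
    | apply UNC_pr_add | apply UNC_pr_mul
    | apply UNC_pr_cons | apply UNC_pr_app | apply UNC_pr_len | apply UNC_pr_range
    | apply UNC_pr_map | apply UNC_pr_flatMap | apply UNC_pr_getD | apply UNC_pr_repl | apply UNC_pr_pair

set_option maxHeartbeats 2000000 in
lemma UNC_pr_gFives {K : α → ℕ} {f : α → List UNC_Tri} (z : ℕ)
    (hK : Primrec K) (hf : Primrec f) : Primrec (fun a => UNC_gFives (K a) (f a) z) := by
  unfold UNC_gFives UNC_nm
  repeat' with_reducible
    first
    | assumption | exact Primrec.const _ | exact UNC_pr_id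
    | exact hf.comp Primrec.fst | exact hK.comp Primrec.fst
    | exact Primrec.fst | exact Primrec.snd
    | apply UNC_pr_fst | apply UNC_pr_snd
    | apply UNC_pr_add | apply UNC_pr_mul
    | apply UNC_pr_cons | apply UNC_pr_app | apply UNC_pr_len | apply UNC_pr_range
    | apply UNC_pr_map | apply UNC_pr_flatMap | apply UNC_pr_getD | apply UNC_pr_repl | apply UNC_pr_pair

lemma UNC_pr_gNet {K : α → ℕ} {f : α → List UNC_Tri} (z p : ℕ)
    (hK : Primrec K) (hf : Primrec f) : Primrec (fun a => UNC_gNet (K a) (f a) z p) := by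
  have h1 := UNC_pr_gFives z hK hf
  have h2 : Primrec (fun a => 1 + 25 * K a) :=
    UNC_pr_add (Primrec.const _) (UNC_pr_mul (Primrec.const _) hK)
  have h3 := UNC_pr_fQuads h2 h1
  have h4 := UNC_pr_add h2 (UNC_pr_len h1)
  exact UNC_pr_toNet (UNC_pr_qVs h4 h3) (UNC_pr_qDs h4 h3 (Primrec.const (UNC_nm p 0 4)))

lemma UNC_pr_Tn (k o e xa ya xb : ℕ) (T0 : List UNC_Tri) :
    Primrec (UNC_Tn k o e xa ya xb T0) := by
  unfold UNC_Tn
  repeat' with_reducible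
    first
    | assumption | exact Primrec.const _ | exact UNC_pr_id
    | exact Primrec.fst | exact Primrec.snd
    | apply UNC_pr_fst | apply UNC_pr_snd
    | apply UNC_pr_add | apply UNC_pr_mul
    | apply UNC_pr_cons | apply UNC_pr_app | apply UNC_pr_len | apply UNC_pr_range
    | apply UNC_pr_map | apply UNC_pr_flatMap | apply UNC_pr_getD | apply UNC_pr_repl | apply UNC_pr_pair

end prim

lemma UNC_pr_mNet {κ Γ Q : Type} [Finite κ] [Finite Γ] [Finite Q] (ins : Q → _) (k0 : κ) (a b : Γ)
    (q0 : Q) : Primrec (UNC_mNet ins k0 a b q0) := by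
  unfold UNC_mNet
  exact UNC_pr_gNet _ _ (UNC_pr_add (UNC_pr_add (Primrec.const _) Primrec.id) (Primrec.const _))
    (UNC_pr_Tn _ _ _ _ _ _ _)

theorem UNC_main (c : ℕ) (hc : 2 ≤ c) :
    ¬ ∃ f : Network → Bool, Computable f ∧
      ∀ net : Network, NetworkValid net →
        (f net = true ↔ ∃ m : ℕ, 1 ≤ m ∧ SolvableWith net (c ^ m)) := by
  rintro ⟨f, hf, H⟩
  have hU : Partrec (fun x : ℕ => (Denumerable.ofNat Nat.Partrec.Code x).eval x) :=
    Nat.Partrec.Code.eval_part.comp (Computable.ofNat _) Computable.id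
  obtain ⟨κ, Γ, Q, _, _, _, ins, k0, a, b, q0, hM⟩ := UNC_machine _ hU
  have hnet : Computable (UNC_mNet ins k0 a b q0) := (UNC_pr_mNet ins k0 a b q0).to_comp
  have hh : Computable (fun x : ℕ => cond (f (UNC_mNet ins k0 a b q0 x)) 1 0) :=
    Computable.cond (hf.comp hnet) (Computable.const 1) (Computable.const 0)
  obtain ⟨e, he⟩ := Nat.Partrec.Code.exists_code.1 (Partrec.nat_iff.1 hh.partrec)
  have hx := hM (Encodable.encode e)
  have hv := H _ (UNC_m_valid ins k0 a b q0 (Encodable.encode e))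
  simp only [Denumerable.ofNat_encode, he] at hx
  cases hb : f (UNC_mNet ins k0 a b q0 (Encodable.encode e)) with
  | true =>
    obtain ⟨m, hm, hs⟩ := hv.1 hb
    obtain ⟨d, hd, hr⟩ := hx.2 (by simp [hb])
    refine UNC_m_sound ins k0 a b q0 _ hd hr ?_ hs
    calc 2 ≤ c ^ 1 := by simpa using hc
      _ ≤ c ^ m := Nat.pow_le_pow_right (by omega) hm
  | false =>
    obtain ⟨d, hd, hr⟩ := hx.1 (by simp [hb])
    have := hv.2 (UNC_m_complete ins k0 a b q0 _ hd hr hc)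
    rw [hb] at this
    cases this

end

/-- Theorem `netcode_vec`: for any fixed `c ≥ 2`, it is undecidable
whether, given a (valid) network, there exists `m ≥ 1` such that the network is solvable
with alphabet size `q = c^m`. -/
theorem undecidable_network_coding_power (c : ℕ) (hc : 2 ≤ c) :
    ¬ ∃ f : Network → Bool, Computable f ∧
      ∀ net : Network, NetworkValid net →
        (f net = true ↔ ∃ m : ℕ, 1 ≤ m ∧ SolvableWith net (c ^ m)) := by
  exact UNC_main c hc

end
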